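/- arXiv:math/0108070 — 9 statements merged into one kernel-verified Lean document; each statement's English description precedes it below -/
import Mathlib

section
/- Let U ⊆ ℝⁿ be open and connected, let g, ĝ : U → ℝ^{n×n} be smooth maps whose values are symmetric invertible matrices, let V, V̂ : U → ℝ be smooth, let C, Ĉ : U × ℝⁿ → ℝⁿ be smooth, and let m ≤ n. Define λ : U → ℝ^{m×n} by λ_a^r = g_{ai} ĝ^{ir} (sum over i), where ĝ^{ir} are the entries of the inverse matrix of ĝ. Then the matching equations — λ_a^r ⟨jk,r⟩ = [jk,a] for all j,k = 1,…,n and a = 1,…,m, λ_a^j Ĉ_j = C_a, and λ_a^j ∂V̂/∂x^j = ∂V/∂x^a — hold on U if and only if λ satisfies the λ-equations, ĝ satisfies the ĝ-equations, V̂ satisfies the V̂-equations, and Ĉ satisfies the Ĉ-equations. -/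
/-- Partial derivative in the `k`-th coordinate direction. -/
noncomputable def pd {n : ℕ} (k : Fin n) (f : (Fin n → ℝ) → ℝ) (x : Fin n → ℝ) : ℝ :=
  fderiv ℝ f x (Pi.single k 1)

/-- Christoffel symbol of the first kind `[ij,k]` of the matrix-valued map `g`. -/
noncomputable def chr {n : ℕ} (g : (Fin n → ℝ) → Matrix (Fin n) (Fin n) ℝ)
    (i j k : Fin n) (x : Fin n → ℝ) : ℝ :=
  (1/2) * (pd i (fun y => g y j k) x + pd j (fun y => g y i k) x - pd k (fun y => g y i j) x)

theorem pd_congr_on {n : ℕ} {U : Set (Fin n → ℝ)} (hU : IsOpen U) {f f' : (Fin n → ℝ) → ℝ}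
    (h : ∀ y ∈ U, f y = f' y) {x : Fin n → ℝ} (hx : x ∈ U) (k : Fin n) : pd k f x = pd k f' x := by
  have : f =ᶠ[nhds x] f' := Filter.eventually_of_mem (hU.mem_nhds hx) h
  unfold pd
  rw [this.fderiv_eq]

theorem pd_sum_mul {n : ℕ} {x : Fin n → ℝ} (k : Fin n) (f f' : Fin n → (Fin n → ℝ) → ℝ)
    (hf : ∀ i, DifferentiableAt ℝ (f i) x) (hf' : ∀ i, DifferentiableAt ℝ (f' i) x) :
    pd k (fun y => ∑ i, f i y * f' i y) x
      = ∑ i, (pd k (f i) x * f' i x + f i x * pd k (f' i) x) := by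
  unfold pd
  rw [fderiv_fun_sum (fun i _ => (hf i).fun_mul (hf' i))]
  rw [ContinuousLinearMap.sum_apply]
  refine Finset.sum_congr rfl fun i _ => ?_
  rw [fderiv_fun_mul (hf i) (hf' i)]
  simp
  ring

theorem diff_det {n : ℕ} {x : Fin n → ℝ} (A : (Fin n → ℝ) → Matrix (Fin n) (Fin n) ℝ)
    (hA : ∀ i j, DifferentiableAt ℝ (fun y => A y i j) x) :
    DifferentiableAt ℝ (fun y => (A y).det) x := by
  simp only [Matrix.det_apply']
  fun_prop

theorem diff_inv {n : ℕ} {x : Fin n → ℝ} (A : (Fin n → ℝ) → Matrix (Fin n) (Fin n) ℝ)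
    (hA : ∀ i j, DifferentiableAt ℝ (fun y => A y i j) x) (hx : IsUnit (A x).det) (i j : Fin n) :
    DifferentiableAt ℝ (fun y => (A y)⁻¹ i j) x := by
  simp only [Matrix.inv_def, Matrix.smul_apply, Ring.inverse_eq_inv', smul_eq_mul,
    Matrix.adjugate_apply]
  refine ((diff_det A hA).inv hx.ne_zero).mul (diff_det _ fun p q => ?_)
  simp only [Matrix.updateRow_apply]
  split_ifs
  · exact differentiableAt_const _
  · exact hA p q

/-- **Theorem 2.1.**  The matching equations are equivalent to the
`λ`-equations together with the `ĝ`-, `V̂`- and `Ĉ`-equations. -/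
theorem matching_iff_lambda_ghat_Vhat_Chat
    {n m : ℕ} (hmn : m ≤ n) (U : Set (Fin n → ℝ))
    (hUopen : IsOpen U) (hUconn : IsConnected U)
    (g ghat : (Fin n → ℝ) → Matrix (Fin n) (Fin n) ℝ)
    (hg : ∀ i j, ContDiffOn ℝ (⊤ : ℕ∞) (fun x => g x i j) U)
    (hghat : ∀ i j, ContDiffOn ℝ (⊤ : ℕ∞) (fun x => ghat x i j) U)
    (hgsym : ∀ x ∈ U, (g x).IsSymm)
    (hghatsym : ∀ x ∈ U, (ghat x).IsSymm)
    (hginv : ∀ x ∈ U, IsUnit (g x).det)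
    (hghatinv : ∀ x ∈ U, IsUnit (ghat x).det)
    (V Vhat : (Fin n → ℝ) → ℝ)
    (hV : ContDiffOn ℝ (⊤ : ℕ∞) V U) (hVhat : ContDiffOn ℝ (⊤ : ℕ∞) Vhat U)
    (C Chat : (Fin n → ℝ) → (Fin n → ℝ) → Fin n → ℝ)
    (hC : ∀ j, ContDiffOn ℝ (⊤ : ℕ∞) (fun p : (Fin n → ℝ) × (Fin n → ℝ) => C p.1 p.2 j)
      (U ×ˢ (Set.univ : Set (Fin n → ℝ))))
    (hChat : ∀ j, ContDiffOn ℝ (⊤ : ℕ∞) (fun p : (Fin n → ℝ) × (Fin n → ℝ) => Chat p.1 p.2 j)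
      (U ×ˢ (Set.univ : Set (Fin n → ℝ))))
    (lam : (Fin n → ℝ) → Fin m → Fin n → ℝ)
    (hlamdef : ∀ x (a : Fin m) (r : Fin n),
      lam x a r = ∑ i, g x (Fin.castLE hmn a) i * (ghat x)⁻¹ i r) :
    -- the matching equations hold on U ...
    ((∀ x ∈ U, ∀ (a : Fin m) (j k : Fin n),
        ∑ r, lam x a r * chr ghat j k r x = chr g j k (Fin.castLE hmn a) x) ∧
     (∀ x ∈ U, ∀ (v : Fin n → ℝ) (a : Fin m),
        ∑ j, lam x a j * Chat x v j = C x v (Fin.castLE hmn a)) ∧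
     (∀ x ∈ U, ∀ (a : Fin m),
        ∑ j, lam x a j * pd j Vhat x = pd (Fin.castLE hmn a) V x))
    ↔
    -- ... iff the λ-equations, ĝ-equations, V̂-equations and Ĉ-equations hold on U
    ((∀ x ∈ U, ∀ (k : Fin n) (a b : Fin m),
        pd k (fun y => ∑ i, g y (Fin.castLE hmn a) i * lam y b i) x
          - ∑ i, chr g k (Fin.castLE hmn a) i x * lam x b i
          - ∑ i, chr g k (Fin.castLE hmn b) i x * lam x a i = 0) ∧
     (∀ x ∈ U, ∀ (a : Fin m) (i j : Fin n),
        ∑ l, lam x a l * pd l (fun y => ghat y i j) x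
          + ∑ l, pd i (fun y => lam y a l) x * ghat x l j
          + ∑ l, pd j (fun y => lam y a l) x * ghat x l i
          = pd (Fin.castLE hmn a) (fun y => g y i j) x) ∧
     (∀ x ∈ U, ∀ (a : Fin m),
        ∑ j, lam x a j * pd j Vhat x = pd (Fin.castLE hmn a) V x) ∧
     (∀ x ∈ U, ∀ (v : Fin n → ℝ) (a : Fin m),
        ∑ j, lam x a j * Chat x v j = C x v (Fin.castLE hmn a))) := by
  have dg : ∀ x ∈ U, ∀ i j, DifferentiableAt ℝ (fun y => g y i j) x := fun x hx i j =>
    ((hg i j).contDiffAt (hUopen.mem_nhds hx)).differentiableAt (by simp)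
  have dh : ∀ x ∈ U, ∀ i j, DifferentiableAt ℝ (fun y => ghat y i j) x := fun x hx i j =>
    ((hghat i j).contDiffAt (hUopen.mem_nhds hx)).differentiableAt (by simp)
  have dl : ∀ x ∈ U, ∀ a r, DifferentiableAt ℝ (fun y => lam y a r) x := by
    intro x hx a r
    simp only [hlamdef]
    exact DifferentiableAt.fun_sum fun i _ =>
      (dg x hx _ i).mul (diff_inv ghat (dh x hx) (hghatinv x hx) i r)
  have key : ∀ x ∈ U, ∀ (a : Fin m) j,
      g x (Fin.castLE hmn a) j = ∑ l, lam x a l * ghat x l j := by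
    intro x hx a j
    have h1 : ∀ l, lam x a l = (g x * (ghat x)⁻¹) (Fin.castLE hmn a) l := by
      intro l; rw [hlamdef, Matrix.mul_apply]
    simp only [h1]
    rw [← Matrix.mul_apply, Matrix.mul_assoc, Matrix.nonsing_inv_mul _ (hghatinv x hx),
      Matrix.mul_one]
  have dkey : ∀ x ∈ U, ∀ k (a : Fin m) j, pd k (fun y => g y (Fin.castLE hmn a) j) x
      = ∑ l, pd k (fun y => lam y a l) x * ghat x l j
        + ∑ l, lam x a l * pd k (fun y => ghat y l j) x := by
    intro x hx k a j
    rw [pd_congr_on hUopen (fun y hy => key y hy a j) hx k,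
      pd_sum_mul k (fun l y => lam y a l) (fun l y => ghat y l j)
        (fun l => dl x hx a l) (fun l => dh x hx l j), Finset.sum_add_distrib]
  have sg : ∀ x ∈ U, ∀ k i j, pd k (fun y => g y i j) x = pd k (fun y => g y j i) x :=
    fun x hx k i j => pd_congr_on hUopen (fun y hy => (hgsym y hy).apply j i) hx k
  have sh : ∀ x ∈ U, ∀ k i j, pd k (fun y => ghat y i j) x = pd k (fun y => ghat y j i) x :=
    fun x hx k i j => pd_congr_on hUopen (fun y hy => (hghatsym y hy).apply j i) hx k
  have hchr : ∀ x ∈ U, ∀ (a : Fin m) (i j : Fin n), ∑ r, lam x a r * chr ghat i j r x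
      = (1/2) * (∑ l, lam x a l * pd i (fun y => ghat y l j) x
        + ∑ l, lam x a l * pd j (fun y => ghat y l i) x
        - ∑ l, lam x a l * pd l (fun y => ghat y i j) x) := by
    intro x hx a i j
    rw [← Finset.sum_add_distrib, ← Finset.sum_sub_distrib, Finset.mul_sum]
    refine Finset.sum_congr rfl fun l _ => ?_
    rw [chr, sh x hx i j l, sh x hx j i l]
    ring
  have equiv : ∀ x ∈ U, ∀ (a : Fin m) (i j : Fin n),
      (∑ r, lam x a r * chr ghat i j r x = chr g i j (Fin.castLE hmn a) x) ↔
      (∑ l, lam x a l * pd l (fun y => ghat y i j) x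
          + ∑ l, pd i (fun y => lam y a l) x * ghat x l j
          + ∑ l, pd j (fun y => lam y a l) x * ghat x l i
          = pd (Fin.castLE hmn a) (fun y => g y i j) x) := by
    intro x hx a i j
    rw [hchr x hx, chr, sg x hx i j, sg x hx j i, dkey x hx i a j, dkey x hx j a i]
    constructor <;> intro h <;> linarith
  constructor
  · rintro ⟨h1, h2, h3⟩
    refine ⟨?_, fun x hx a i j => (equiv x hx a i j).1 (h1 x hx a i j), h3, h2⟩
    intro x hx k a b
    rw [pd_sum_mul k (fun i y => g y (Fin.castLE hmn a) i) (fun i y => lam y b i)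
      (fun i => dg x hx _ i) (fun i => dl x hx b i)]
    have e1 : ∀ i, pd k (fun y => g y (Fin.castLE hmn a) i) x
        = chr g k (Fin.castLE hmn a) i x + ∑ r, lam x a r * chr ghat k i r x := by
      intro i
      rw [h1 x hx, chr, chr, sg x hx k i, sg x hx i k, sg x hx (Fin.castLE hmn a) k i]
      ring
    have e2 : ∀ l, chr g k (Fin.castLE hmn b) l x
        = ∑ i, pd k (fun y => lam y b i) x * ghat x i l
          + ∑ i, lam x b i * pd k (fun y => ghat y i l) x
          - ∑ i, lam x b i * chr ghat k l i x := by
      intro l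
      rw [h1 x hx, ← dkey x hx, chr, chr, sg x hx k l, sg x hx l k, sg x hx (Fin.castLE hmn b) k l]
      ring
    have e3 : ∑ i, g x (Fin.castLE hmn a) i * pd k (fun y => lam y b i) x
        = ∑ l, ∑ i, pd k (fun y => lam y b i) x * ghat x i l * lam x a l := by
      rw [Finset.sum_comm]
      refine Finset.sum_congr rfl fun i _ => ?_
      rw [key x hx, Finset.sum_mul]
      refine Finset.sum_congr rfl fun l _ => ?_
      rw [(hghatsym x hx).apply i l]
      ring
    have e4 : ∑ i, (∑ r, lam x a r * chr ghat k i r x) * lam x b i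
        = ∑ l, ∑ i, lam x a l * chr ghat k i l x * lam x b i := by
      rw [Finset.sum_comm]
      simp only [Finset.sum_mul]
    have e5 : ∑ l, chr g k (Fin.castLE hmn b) l x * lam x a l
        = ∑ l, ∑ i, pd k (fun y => lam y b i) x * ghat x i l * lam x a l
          + ∑ l, ∑ i, lam x a l * chr ghat k i l x * lam x b i := by
      rw [← Finset.sum_add_distrib]
      refine Finset.sum_congr rfl fun l _ => ?_
      rw [e2, ← Finset.sum_add_distrib, ← Finset.sum_add_distrib, ← Finset.sum_sub_distrib,
        Finset.sum_mul]
      refine Finset.sum_congr rfl fun i _ => ?_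
      rw [chr, chr, sh x hx k l i, sh x hx i k l, sh x hx l k i]
      ring
    rw [e5, ← e3, ← e4]
    simp only [e1, add_mul, Finset.sum_add_distrib]
    ring
  · rintro ⟨_, h2, h3, h4⟩
    exact ⟨fun x hx a i j => (equiv x hx a i j).2 (h2 x hx a i j), h4, h3⟩
end

section
/- Let U ⊆ ℝⁿ be open, let g : U → ℝ^{n×n} be smooth, symmetric and invertible, V : U → ℝ smooth, C : U × ℝⁿ → ℝⁿ smooth, and m ≤ n. Let κ ≠ 0 be a constant, let V° be a smooth function depending only on the variables x^{m+1},…,xⁿ, and let g° be a smooth symmetric matrix-valued function depending only on x^{m+1},…,xⁿ with g°_{ia} = 0 whenever a ≤ m. Then the basic solution λ_a^k = κ δ_a^k, ĝ = (1/κ) g + g°, V̂ = (1/κ) V + V°, Ĉ_j = (1/κ) C_j satisfies the λ-equations, the ĝ-equations, the V̂-equations, and the Ĉ-equations. -/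
theorem pd_zero_of_dep {n m : ℕ} (k : Fin n) (hk : (k : ℕ) < m) (f : (Fin n → ℝ) → ℝ)
    (hf : Differentiable ℝ f)
    (hdep : ∀ x y : Fin n → ℝ, (∀ l : Fin n, m ≤ (l : ℕ) → x l = y l) → f x = f y)
    (x : Fin n → ℝ) : pd k f x = 0 := by
  unfold pd
  rw [← (hf x).lineDeriv_eq_fderiv]
  unfold lineDeriv
  have h : (fun t : ℝ => f (x + t • (Pi.single k 1 : Fin n → ℝ))) = fun _ => f x := by
    funext t
    apply hdep
    intro l hl
    have hne : l ≠ k := by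
      rintro rfl
      omega
    simp [Pi.single_apply, hne]
  rw [h]
  simp

theorem pd_comb {n : ℕ} (k : Fin n) (c : ℝ) (f h : (Fin n → ℝ) → ℝ) (x : Fin n → ℝ)
    (hf : DifferentiableAt ℝ f x) (hh : DifferentiableAt ℝ h x) :
    pd k (fun y => c * f y + h y) x = c * pd k f x + pd k h x := by
  have := ((hf.hasFDerivAt.const_mul c).add hh.hasFDerivAt).fderiv
  unfold pd
  change fderiv ℝ ((fun y => c * f y) + h) x _ = _
  rw [this]
  simp

/-- **Remark 2.2.**  The basic solutions `λ_a^k = κ δ_a^k`, `ĝ = κ⁻¹ g + g°`,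
`V̂ = κ⁻¹ V + V°`, `Ĉ = κ⁻¹ C` satisfy the λ-, ĝ-, V̂- and Ĉ-equations. -/
theorem basic_solutions_solve_matching
    {n m : ℕ} (hmn : m ≤ n) (U : Set (Fin n → ℝ)) (hUopen : IsOpen U)
    (g : (Fin n → ℝ) → Matrix (Fin n) (Fin n) ℝ)
    (hg : ∀ i j, ContDiffOn ℝ (⊤ : ℕ∞) (fun x => g x i j) U)
    (hgsym : ∀ x ∈ U, (g x).IsSymm)
    (hginv : ∀ x ∈ U, IsUnit (g x).det)
    (V : (Fin n → ℝ) → ℝ) (hV : ContDiffOn ℝ (⊤ : ℕ∞) V U)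
    (C : (Fin n → ℝ) → (Fin n → ℝ) → Fin n → ℝ)
    (hC : ∀ j, ContDiffOn ℝ (⊤ : ℕ∞) (fun p : (Fin n → ℝ) × (Fin n → ℝ) => C p.1 p.2 j)
      (U ×ˢ (Set.univ : Set (Fin n → ℝ))))
    (κ : ℝ) (hκ : κ ≠ 0)
    -- V° : smooth, depending only on the variables x^{m+1}, …, xⁿ
    (V0 : (Fin n → ℝ) → ℝ) (hV0 : ContDiff ℝ (⊤ : ℕ∞) V0)
    (hV0dep : ∀ x y : Fin n → ℝ, (∀ l : Fin n, m ≤ (l : ℕ) → x l = y l) → V0 x = V0 y)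
    -- g° : smooth symmetric, depending only on x^{m+1}, …, xⁿ, with g°_{ia} = 0 for a ≤ m
    (g0 : (Fin n → ℝ) → Matrix (Fin n) (Fin n) ℝ)
    (hg0 : ∀ i j, ContDiff ℝ (⊤ : ℕ∞) (fun x => g0 x i j))
    (hg0sym : ∀ x, (g0 x).IsSymm)
    (hg0dep : ∀ x y : Fin n → ℝ, (∀ l : Fin n, m ≤ (l : ℕ) → x l = y l) → g0 x = g0 y)
    (hg0a : ∀ x, ∀ i : Fin n, ∀ a : Fin n, (a : ℕ) < m → g0 x i a = 0) :
    -- λ-equations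
    (∀ x ∈ U, ∀ (k : Fin n) (a b : Fin m),
        pd k (fun y => ∑ i, g y (Fin.castLE hmn a) i *
            (κ * if (Fin.castLE hmn b : Fin n) = i then 1 else 0)) x
          - ∑ i, chr g k (Fin.castLE hmn a) i x *
              (κ * if (Fin.castLE hmn b : Fin n) = i then 1 else 0)
          - ∑ i, chr g k (Fin.castLE hmn b) i x *
              (κ * if (Fin.castLE hmn a : Fin n) = i then 1 else 0) = 0) ∧
    -- ĝ-equations, with ĝ = κ⁻¹ g + g°
    (∀ x ∈ U, ∀ (a : Fin m) (i j : Fin n),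
        ∑ l, (κ * if (Fin.castLE hmn a : Fin n) = l then 1 else 0) *
            pd l (fun y => κ⁻¹ * g y i j + g0 y i j) x
          + ∑ l, pd i (fun y => (κ * if (Fin.castLE hmn a : Fin n) = l then 1 else 0)) x *
              (κ⁻¹ * g x l j + g0 x l j)
          + ∑ l, pd j (fun y => (κ * if (Fin.castLE hmn a : Fin n) = l then 1 else 0)) x *
              (κ⁻¹ * g x l i + g0 x l i)
          = pd (Fin.castLE hmn a) (fun y => g y i j) x) ∧
    -- V̂-equations, with V̂ = κ⁻¹ V + V°
    (∀ x ∈ U, ∀ (a : Fin m),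
        ∑ j, (κ * if (Fin.castLE hmn a : Fin n) = j then 1 else 0) *
            pd j (fun y => κ⁻¹ * V y + V0 y) x
          = pd (Fin.castLE hmn a) V x) ∧
    -- Ĉ-equations, with Ĉ_j = κ⁻¹ C_j
    (∀ x ∈ U, ∀ (v : Fin n → ℝ) (a : Fin m),
        ∑ j, (κ * if (Fin.castLE hmn a : Fin n) = j then 1 else 0) * (κ⁻¹ * C x v j)
          = C x v (Fin.castLE hmn a)) := by
  have hd : ∀ f : (Fin n → ℝ) → ℝ, ContDiffOn ℝ (⊤ : ℕ∞) f U → ∀ x ∈ U,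
      DifferentiableAt ℝ f x := fun f hf x hx =>
    (hf.contDiffAt (hUopen.mem_nhds hx)).differentiableAt (by simp)
  refine ⟨?_, ?_, ?_, ?_⟩
  · intro x hx k a b
    have hsym : ∀ i j, pd k (fun y => g y i j) x = pd k (fun y => g y j i) x := by
      intro i j
      unfold pd
      have : (fun y => g y i j) =ᶠ[nhds x] fun y => g y j i := by
        filter_upwards [hUopen.mem_nhds hx] with y hy
        exact (hgsym y hy).apply j i
      rw [this.fderiv_eq]
    have h1 := pd_comb k κ (fun y => g y (Fin.castLE hmn a) (Fin.castLE hmn b)) (fun _ => 0) x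
      (hd _ (hg _ _) x hx) (differentiableAt_const _)
    have h0 : pd k (fun _ => (0 : ℝ)) x = 0 := by simp [pd]
    simp only [add_zero, h0] at h1
    simp only [mul_ite, mul_one, mul_zero, Finset.sum_ite_eq, Finset.mem_univ, if_true]
    simp only [mul_comm _ κ]
    rw [h1]
    unfold chr
    rw [hsym (Fin.castLE hmn b) (Fin.castLE hmn a)]
    ring
  · intro x hx a i j
    have hc : ∀ (k : Fin n) (c : ℝ), pd k (fun _ => c) x = 0 := by
      intro k c
      simp [pd]
    have h1 := pd_comb (Fin.castLE hmn a) κ⁻¹ (fun y => g y i j) (fun y => g0 y i j) x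
      (hd _ (hg _ _) x hx) ((hg0 i j).differentiable (by simp) x)
    rw [pd_zero_of_dep (m := m) _ (by simp) (fun y => g0 y i j)
      ((hg0 i j).differentiable (by simp))
      (fun x y h => by simp only [hg0dep x y h])] at h1
    simp only [hc, zero_mul, Finset.sum_const_zero, add_zero, ite_mul, mul_ite, mul_one, mul_zero,
      Finset.sum_ite_eq, Finset.mem_univ, if_true]
    rw [h1]
    field_simp
    simp
  · intro x hx a
    have h1 := pd_comb (Fin.castLE hmn a) κ⁻¹ V V0 x
      (hd _ hV x hx) (hV0.differentiable (by simp) x)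
    rw [pd_zero_of_dep (m := m) _ (by simp) V0 (hV0.differentiable (by simp)) hV0dep] at h1
    simp only [zero_mul, ite_mul, mul_ite, mul_one, mul_zero,
      Finset.sum_ite_eq, Finset.mem_univ, if_true]
    rw [h1]
    field_simp
    simp
  · intro x hx v a
    simp only [zero_mul, ite_mul, mul_ite, mul_one, mul_zero,
      Finset.sum_ite_eq, Finset.mem_univ, if_true]
    field_simp
end

section
/- Let U ⊆ ℝⁿ be open, g : U → ℝ^{n×n} smooth symmetric invertible, and suppose m = 1 (one unactuated degree of freedom; write λ^i for λ_1^i). Suppose λ : U → ℝⁿ is smooth and satisfies the λ-equations ∂(g_{1i}λ^i)/∂x^k − 2[k1,i]λ^i = 0 for all k, and ĝ : U → ℝ^{n×n} is smooth symmetric and satisfies the ĝ-equations λ^ℓ ∂ĝ_{ij}/∂x^ℓ + (∂λ^ℓ/∂x^i)ĝ_{ℓj} + (∂λ^ℓ/∂x^j)ĝ_{ℓi} = ∂g_{ij}/∂x¹ for all i,j. Define Ξ_i = g_{1i} − λ^j ĝ_{ji}. Then the transport identity λ^ℓ ∂Ξ_i/∂x^ℓ + (∂λ^ℓ/∂x^i)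 Ξ_ℓ = 0 holds on U for every i = 1,…,n. -/
lemma pd_mul_aux {n : ℕ} (k : Fin n) {f h : (Fin n → ℝ) → ℝ} {x : Fin n → ℝ}
    (hf : DifferentiableAt ℝ f x) (hh : DifferentiableAt ℝ h x) :
    pd k (fun y => f y * h y) x = f x * pd k h x + pd k f x * h x := by
  unfold pd
  rw [fderiv_fun_mul hf hh]
  simp [mul_comm]

lemma pd_sum_aux {n m : ℕ} (k : Fin n) {f : Fin m → (Fin n → ℝ) → ℝ} {x : Fin n → ℝ}
    (hf : ∀ i, DifferentiableAt ℝ (f i) x) :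
    pd k (fun y => ∑ i, f i y) x = ∑ i, pd k (f i) x := by
  unfold pd
  rw [fderiv_fun_sum (fun i _ => hf i)]
  simp

lemma pd_sub_aux {n : ℕ} (k : Fin n) {f h : (Fin n → ℝ) → ℝ} {x : Fin n → ℝ}
    (hf : DifferentiableAt ℝ f x) (hh : DifferentiableAt ℝ h x) :
    pd k (fun y => f y - h y) x = pd k f x - pd k h x := by
  unfold pd
  rw [fderiv_fun_sub hf hh]
  simp

/-- **Remark 3.2.**  If `λ` solves the λ-equations and `ĝ` solves the ĝ-equations
(`m = 1`), then `Ξ_i = g_{1i} − λ^j ĝ_{ji}` satisfies the transport identity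
`λ^ℓ ∂Ξ_i/∂x^ℓ + (∂λ^ℓ/∂x^i) Ξ_ℓ = 0` on `U`. -/
theorem transport_identity_for_Xi
    {n : ℕ} (U : Set (Fin (n+1) → ℝ)) (hUopen : IsOpen U)
    (g ghat : (Fin (n+1) → ℝ) → Matrix (Fin (n+1)) (Fin (n+1)) ℝ)
    (lam : (Fin (n+1) → ℝ) → Fin (n+1) → ℝ)
    (hg : ∀ i j, ContDiffOn ℝ (⊤ : ℕ∞) (fun x => g x i j) U)
    (hgsym : ∀ x ∈ U, (g x).IsSymm)
    (hginv : ∀ x ∈ U, IsUnit (g x).det)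
    (hlam : ∀ i, ContDiffOn ℝ (⊤ : ℕ∞) (fun x => lam x i) U)
    (hghat : ∀ i j, ContDiffOn ℝ (⊤ : ℕ∞) (fun x => ghat x i j) U)
    (hghatsym : ∀ x ∈ U, (ghat x).IsSymm)
    -- the λ-equations:  ∂(g_{1i} λ^i)/∂x^k − 2 [k1,i] λ^i = 0
    (hlamEq : ∀ x ∈ U, ∀ k, pd k (fun y => ∑ i, g y 0 i * lam y i) x
        - 2 * ∑ i, chr g k 0 i x * lam x i = 0)
    -- the ĝ-equations
    (hghatEq : ∀ x ∈ U, ∀ i j,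
        ∑ l, lam x l * pd l (fun y => ghat y i j) x
        + ∑ l, pd i (fun y => lam y l) x * ghat x l j
        + ∑ l, pd j (fun y => lam y l) x * ghat x l i
        = pd 0 (fun y => g y i j) x) :
    -- transport identity for Ξ_i = g_{1i} − λ^j ĝ_{ji}
    ∀ x ∈ U, ∀ i,
      ∑ l, lam x l * pd l (fun y => g y 0 i - ∑ j, lam y j * ghat y j i) x
      + ∑ l, pd i (fun y => lam y l) x * (g x 0 l - ∑ j, lam x j * ghat x j l) = 0 := by
  intro x hx i
  have hU : U ∈ nhds x := hUopen.mem_nhds hx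
  have dg : ∀ i j, DifferentiableAt ℝ (fun y => g y i j) x := fun i j =>
    ((hg i j).contDiffAt hU).differentiableAt (by simp)
  have dh : ∀ i j, DifferentiableAt ℝ (fun y => ghat y i j) x := fun i j =>
    ((hghat i j).contDiffAt hU).differentiableAt (by simp)
  have dl : ∀ i, DifferentiableAt ℝ (fun y => lam y i) x := fun i =>
    ((hlam i).contDiffAt hU).differentiableAt (by simp)
  have sg : ∀ k i j, pd k (fun y => g y i j) x = pd k (fun y => g y j i) x := by
    intro k i j
    unfold pd
    rw [Filter.EventuallyEq.fderiv_eq]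
    filter_upwards [hU] with y hy
    exact (hgsym y hy).apply j i
  have sh : ∀ i j, ghat x i j = ghat x j i := fun i j => (hghatsym x hx).apply j i
  have e1 := hlamEq x hx i
  rw [pd_sum_aux i (fun j => (dg 0 j).fun_mul (dl j))] at e1
  simp only [fun j => pd_mul_aux i (dg 0 j) (dl j), chr] at e1
  have e1' : ∑ l, lam x l * pd l (fun y => g y 0 i) x
      + ∑ l, pd i (fun y => lam y l) x * g x 0 l
      = ∑ j, lam x j * pd 0 (fun y => g y j i) x := by
    rw [← sub_eq_zero, ← e1, Finset.mul_sum, ← Finset.sum_add_distrib,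
      ← Finset.sum_sub_distrib, ← Finset.sum_sub_distrib]
    refine Finset.sum_congr rfl fun l _ => ?_
    rw [sg l i 0, sg 0 i l]
    ring
  have e2 : ∑ j, lam x j * (∑ l, lam x l * pd l (fun y => ghat y j i) x
        + ∑ l, pd j (fun y => lam y l) x * ghat x l i
        + ∑ l, pd i (fun y => lam y l) x * ghat x l j)
      = ∑ j, lam x j * pd 0 (fun y => g y j i) x :=
    Finset.sum_congr rfl fun j _ => by rw [hghatEq x hx j i]
  have e3 : ∀ l, pd l (fun y => g y 0 i - ∑ j, lam y j * ghat y j i) x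
      = pd l (fun y => g y 0 i) x - ∑ j, (lam x j * pd l (fun y => ghat y j i) x
        + pd l (fun y => lam y j) x * ghat x j i) := by
    intro l
    rw [pd_sub_aux l (dg 0 i) (DifferentiableAt.fun_sum fun j _ => (dl j).fun_mul (dh j i)),
      pd_sum_aux l (fun j => (dl j).fun_mul (dh j i))]
    simp only [fun j => pd_mul_aux l (dl j) (dh j i)]
  simp only [e3]
  simp only [mul_sub, mul_add, Finset.sum_sub_distrib, Finset.sum_add_distrib,
    Finset.mul_sum] at e2 ⊢
  have c1 : ∑ l, ∑ j, lam x l * (lam x j * pd l (fun y => ghat y j i) x)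
      = ∑ j, ∑ l, lam x j * (lam x l * pd l (fun y => ghat y j i) x) := by
    rw [Finset.sum_comm]
    exact Finset.sum_congr rfl fun j _ => Finset.sum_congr rfl fun l _ => by ring
  have c2 : ∑ l, ∑ j, pd i (fun y => lam y l) x * (lam x j * ghat x j l)
      = ∑ j, ∑ l, lam x j * (pd i (fun y => lam y l) x * ghat x l j) := by
    rw [Finset.sum_comm]
    exact Finset.sum_congr rfl fun j _ => Finset.sum_congr rfl fun l _ => by
      rw [sh j l]; ring
  linarith
end

section
/- Let U ⊆ ℝⁿ be open, g : U → ℝ^{n×n} smooth symmetric invertible, V : U → ℝ smooth, m = 1 (write λ^i for λ_1^i). Let λ : U → ℝⁿ be a smooth nowhere-zero solution of the λ-equations ∂(g_{1i}λ^i)/∂x^k − 2[k1,i]λ^i = 0, and let y : U → Ω ⊆ ℝⁿ be a diffeomorphism straightening λ, i.e. λ^i(x) ∂y^j/∂x^i = δ_1^j for all x ∈ U and all j. Assume the slice Σ = {y¹ = 0} is nonempty and Ω = I × Σ' for an interval I ∋ 0. Then for any smooth symmetric matrix-valued initial data Ĝ⁰ and any smooth scalar initial data V̂⁰ prescribed on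 Σ, there exists a unique smooth symmetric ĝ : U → ℝ^{n×n} and a unique smooth V̂ : U → ℝ solving the ĝ-equations λ^ℓ ∂ĝ_{ij}/∂x^ℓ + (∂λ^ℓ/∂x^i)ĝ_{ℓj} + (∂λ^ℓ/∂x^j)ĝ_{ℓi} = ∂g_{ij}/∂x¹ (all i,j) and the V̂-equation λ^j ∂V̂/∂x^j = ∂V/∂x¹ on U, whose representatives in the y-coordinates restrict to Ĝ⁰ and V̂⁰ on Σ. -/
open Set Filter Topology MeasureTheory in
theorem aux_hasFDerivAt {H E : Type} [NormedAddCommGroup H] [NormedSpace ℝ H] [FiniteDimensional ℝ H]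
    [NormedAddCommGroup E] [NormedSpace ℝ E] [CompleteSpace E] {W : Set (H × ℝ)} (hW : IsOpen W)
    {O : Set H} (hO : IsOpen O) (hOW : ∀ q ∈ O, ∀ s ∈ Icc (0:ℝ) 1, (q, s) ∈ W)
    {f : H × ℝ → E} (hf : ContDiffOn ℝ (⊤ : ℕ∞) f W) {q : H} (hq : q ∈ O) :
    HasFDerivAt (fun q => ∫ s in (0:ℝ)..1, f (q, s))
      (∫ s in (0:ℝ)..1, (fderiv ℝ f (q, s)).comp (ContinuousLinearMap.inl ℝ H ℝ)) q := by
  have : ProperSpace H := FiniteDimensional.proper ℝ H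
  have hI : uIoc (0:ℝ) 1 ⊆ Icc 0 1 := by
    rw [uIoc_of_le zero_le_one]; exact Ioc_subset_Icc_self
  obtain ⟨r, hr, hrO⟩ := Metric.isOpen_iff.1 hO q hq
  have hrO' : Metric.closedBall q (r/2) ⊆ O :=
    (Metric.closedBall_subset_ball (by linarith)).trans hrO
  have hf' : ContDiffOn ℝ (⊤ : ℕ∞) (fderiv ℝ f) W := hf.fderiv_of_isOpen hW (by simp)
  have hF' : ContinuousOn (fun p => (fderiv ℝ f p).comp (ContinuousLinearMap.inl ℝ H ℝ)) W :=
    hf'.continuousOn.clm_comp continuousOn_const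
  have hline : ∀ p ∈ O, ContinuousOn (fun s => f (p, s)) (Icc 0 1) := fun p hp =>
    hf.continuousOn.comp (by fun_prop) (fun s hs => hOW p hp s hs)
  have hline' : ContinuousOn (fun s => (fderiv ℝ f (q, s)).comp (ContinuousLinearMap.inl ℝ H ℝ))
      (Icc (0:ℝ) 1) :=
    hF'.comp (f := fun s : ℝ => (q, s)) (by fun_prop) (fun s hs => hOW q hq s hs)
  have hcpt : IsCompact (Metric.closedBall q (r/2) ×ˢ Icc (0:ℝ) 1) :=
    (isCompact_closedBall _ _).prod isCompact_Icc
  have hsub : Metric.closedBall q (r/2) ×ˢ Icc (0:ℝ) 1 ⊆ W := by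
    rintro ⟨p, s⟩ ⟨hp, hs⟩
    exact hOW p (hrO' hp) s hs
  obtain ⟨C, hC⟩ := hcpt.exists_bound_of_continuousOn (hF'.mono hsub)
  refine intervalIntegral.hasFDerivAt_integral_of_dominated_of_fderiv_le (𝕜 := ℝ) (μ := volume)
    (F := fun q s => f (q, s))
    (F' := fun q s => (fderiv ℝ f (q, s)).comp (ContinuousLinearMap.inl ℝ H ℝ))
    (s := Metric.closedBall q (r/2)) (bound := fun _ => C)
    (Metric.closedBall_mem_nhds q (by linarith)) ?_ ?_ ?_ ?_ ?_ ?_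
  · filter_upwards [hO.mem_nhds hq] with p hp
    exact ((hline p hp).mono hI).aestronglyMeasurable measurableSet_uIoc
  · apply ContinuousOn.intervalIntegrable
    rw [uIcc_of_le zero_le_one]; exact hline q hq
  · exact (hline'.mono hI).aestronglyMeasurable measurableSet_uIoc
  · exact Eventually.of_forall fun t ht p hp => hC (p, t) ⟨hp, hI ht⟩
  · simp
  · refine Eventually.of_forall fun t ht p hp => ?_
    have hpW : (p, t) ∈ W := hsub ⟨hp, hI ht⟩
    have h1 : HasFDerivAt f (fderiv ℝ f (p, t)) (p, t) :=
      ((hf.contDiffAt (hW.mem_nhds hpW)).differentiableAt (by simp)).hasFDerivAt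
    exact h1.comp p (hasFDerivAt_prodMk_left p t)

open Set Filter Topology MeasureTheory in
theorem aux_contDiffOn_nat (k : ℕ) : ∀ {H E : Type} [NormedAddCommGroup H] [NormedSpace ℝ H]
    [FiniteDimensional ℝ H]
    [NormedAddCommGroup E] [NormedSpace ℝ E] [CompleteSpace E] {W : Set (H × ℝ)} (_ : IsOpen W)
    {O : Set H} (_ : IsOpen O) (_ : ∀ q ∈ O, ∀ s ∈ Icc (0:ℝ) 1, (q, s) ∈ W)
    {f : H × ℝ → E} (_ : ContDiffOn ℝ (⊤ : ℕ∞) f W),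
    ContDiffOn ℝ k (fun q => ∫ s in (0:ℝ)..1, f (q, s)) O := by
  induction k with
  | zero =>
    intro H E _ _ _ _ _ _ W hW O hO hOW f hf
    rw [Nat.cast_zero, contDiffOn_zero]
    exact fun q hq => (aux_hasFDerivAt hW hO hOW hf hq).continuousAt.continuousWithinAt
  | succ k ih =>
    intro H E _ _ _ _ _ _ W hW O hO hOW f hf
    rw [Nat.cast_succ, contDiffOn_succ_iff_fderiv_of_isOpen hO]
    refine ⟨fun q hq => (aux_hasFDerivAt hW hO hOW hf hq).differentiableAt.differentiableWithinAt,
      by simp, ?_⟩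
    have hf' : ContDiffOn ℝ (⊤ : ℕ∞) (fderiv ℝ f) W := hf.fderiv_of_isOpen hW (by simp)
    have := ih hW hO hOW (f := fun p => (fderiv ℝ f p).comp (ContinuousLinearMap.inl ℝ H ℝ))
      (hf'.clm_comp contDiffOn_const)
    exact this.congr fun q hq => (aux_hasFDerivAt hW hO hOW hf hq).fderiv

/-- antiderivative in the zeroth coordinate -/
noncomputable def adv {n : ℕ} (h : (Fin (n+1) → ℝ) → ℝ) (q : Fin (n+1) → ℝ) : ℝ :=
  ∫ t in (0:ℝ)..(q 0), h (Function.update q 0 t)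

theorem adv_slice {n : ℕ} (h : (Fin (n+1) → ℝ) → ℝ) {q : Fin (n+1) → ℝ} (hq : q 0 = 0) :
    adv h q = 0 := by
  simp [adv, hq]

theorem update_contDiff {n : ℕ} : ContDiff ℝ (⊤ : ℕ∞)
    (fun p : (Fin (n+1) → ℝ) × ℝ => (Function.update p.1 0 p.2 : Fin (n+1) → ℝ)) := by
  rw [contDiff_pi]
  intro i
  by_cases hi : i = 0
  · subst hi; simpa using contDiff_snd
  · simp only [Function.update_of_ne hi]
    fun_prop

open Set in
theorem adv_contDiffOn {n : ℕ} {Ω : Set (Fin (n+1) → ℝ)} (hΩ : IsOpen Ω) {I : Set ℝ}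
    (hI0 : (0 : ℝ) ∈ I) (hIconn : I.OrdConnected) (hprod1 : ∀ q ∈ Ω, q 0 ∈ I)
    (hprod2 : ∀ q ∈ Ω, ∀ t ∈ I, Function.update q 0 t ∈ Ω)
    {h : (Fin (n+1) → ℝ) → ℝ} (hh : ContDiffOn ℝ (⊤ : ℕ∞) h Ω) :
    ContDiffOn ℝ (⊤ : ℕ∞) (adv h) Ω := by
  have hφ : ContDiff ℝ (⊤ : ℕ∞) (fun p : (Fin (n+1) → ℝ) × ℝ =>
      (Function.update p.1 0 (p.1 0 * p.2) : Fin (n+1) → ℝ)) :=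
    update_contDiff.comp (g := fun p : (Fin (n+1) → ℝ) × ℝ =>
      (Function.update p.1 0 p.2 : Fin (n+1) → ℝ))
      (f := fun p : (Fin (n+1) → ℝ) × ℝ => (p.1, p.1 0 * p.2)) (by fun_prop)
  have hW : IsOpen ((fun p : (Fin (n+1) → ℝ) × ℝ =>
      (Function.update p.1 0 (p.1 0 * p.2) : Fin (n+1) → ℝ)) ⁻¹' Ω) :=
    hΩ.preimage hφ.continuous
  have key : ContDiffOn ℝ (⊤ : ℕ∞)
      (fun q => ∫ s in (0:ℝ)..1, h (Function.update q 0 (q 0 * s))) Ω := by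
    rw [contDiffOn_infty]
    intro k
    refine aux_contDiffOn_nat k hW hΩ ?_ (f := fun p : (Fin (n+1) → ℝ) × ℝ =>
      h (Function.update p.1 0 (p.1 0 * p.2))) (hh.comp hφ.contDiffOn (fun p hp => hp))
    intro q hq s hs
    refine hprod2 q hq _ ?_
    have hc : Convex ℝ I := hIconn.convex
    have := hc hI0 (hprod1 q hq) (a := 1 - s) (b := s) (by linarith [hs.2]) hs.1 (by ring)
    simpa [mul_comm] using this
  have h2 : ContDiffOn ℝ (⊤ : ℕ∞) (fun q : Fin (n+1) → ℝ => q 0) Ω := by fun_prop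
  refine (h2.mul key).congr fun q hq => ?_
  have := intervalIntegral.mul_integral_comp_mul_left (a := 0) (b := 1)
    (f := fun t => h (Function.update q 0 t)) (q 0)
  simp only [mul_zero, mul_one] at this
  exact this.symm

theorem hasDerivAt_updF {n : ℕ} {F : (Fin (n+1) → ℝ) → ℝ} {q : Fin (n+1) → ℝ} {t : ℝ}
    (hF : DifferentiableAt ℝ F (Function.update q 0 t)) :
    HasDerivAt (fun t => F (Function.update q 0 t)) (pd 0 F (Function.update q 0 t)) t :=
  hF.hasFDerivAt.comp_hasDerivAt t (hasDerivAt_update q 0 t)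

open Set Filter Topology MeasureTheory in
theorem pd_adv {n : ℕ} {Ω : Set (Fin (n+1) → ℝ)} (hΩ : IsOpen Ω) {I : Set ℝ}
    (hI0 : (0 : ℝ) ∈ I) (hIconn : I.OrdConnected) (hprod1 : ∀ q ∈ Ω, q 0 ∈ I)
    (hprod2 : ∀ q ∈ Ω, ∀ t ∈ I, Function.update q 0 t ∈ Ω)
    {h : (Fin (n+1) → ℝ) → ℝ} (hh : ContDiffOn ℝ (⊤ : ℕ∞) h Ω)
    {q : Fin (n+1) → ℝ} (hq : q ∈ Ω) : pd 0 (adv h) q = h q := by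
  have hsm := adv_contDiffOn hΩ hI0 hIconn hprod1 hprod2 hh
  have hupd : Function.update q 0 (q 0) = q := Function.update_eq_self 0 q
  have hcu : Continuous (fun t : ℝ => (Function.update q 0 t : Fin (n+1) → ℝ)) := by fun_prop
  have hopen : IsOpen ((fun t : ℝ => (Function.update q 0 t : Fin (n+1) → ℝ)) ⁻¹' Ω) :=
    hΩ.preimage hcu
  have hcl : ContinuousOn (fun t => h (Function.update q 0 t))
      ((fun t : ℝ => (Function.update q 0 t : Fin (n+1) → ℝ)) ⁻¹' Ω) :=
    hh.continuousOn.comp hcu.continuousOn (fun t ht => ht)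
  have hmem : q 0 ∈ ((fun t : ℝ => (Function.update q 0 t : Fin (n+1) → ℝ)) ⁻¹' Ω) := by
    simpa [hupd] using hq
  have h1 : HasDerivAt (fun t => adv h (Function.update q 0 t)) (pd 0 (adv h) q) (q 0) := by
    have := hasDerivAt_updF (F := adv h) (q := q) (t := q 0)
      (by rw [hupd]; exact (hsm.contDiffAt (hΩ.mem_nhds hq)).differentiableAt (by simp))
    rwa [hupd] at this
  have h2 : HasDerivAt (fun t => adv h (Function.update q 0 t)) (h q) (q 0) := by
    have : (fun t => adv h (Function.update q 0 t)) =
        fun u => ∫ t in (0:ℝ)..u, h (Function.update q 0 t) := by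
      funext u; simp [adv]
    rw [this]
    have := intervalIntegral.integral_hasDerivAt_right (a := 0) (b := q 0)
      (f := fun t => h (Function.update q 0 t)) ?_ ?_ ?_
    · simpa [hupd] using this
    · apply ContinuousOn.intervalIntegrable
      exact hcl.mono fun t ht => hprod2 q hq t (hIconn.uIcc_subset hI0 (hprod1 q hq) ht)
    · exact hcl.stronglyMeasurableAtFilter hopen _ hmem
    · exact hcl.continuousAt (hopen.mem_nhds hmem)
  exact h1.unique h2

theorem eq_of_pd_eq {n : ℕ} {Ω : Set (Fin (n+1) → ℝ)} (hΩ : IsOpen Ω) {I : Set ℝ}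
    (hI0 : (0 : ℝ) ∈ I) (hIconn : I.OrdConnected) (hprod1 : ∀ q ∈ Ω, q 0 ∈ I)
    (hprod2 : ∀ q ∈ Ω, ∀ t ∈ I, Function.update q 0 t ∈ Ω)
    {F G : (Fin (n+1) → ℝ) → ℝ} (hF : ContDiffOn ℝ (⊤ : ℕ∞) F Ω) (hG : ContDiffOn ℝ (⊤ : ℕ∞) G Ω)
    (hd : ∀ q ∈ Ω, pd 0 F q = pd 0 G q) (hs : ∀ q ∈ Ω, q 0 = 0 → F q = G q)
    {q : Fin (n+1) → ℝ} (hq : q ∈ Ω) : F q = G q := by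
  have hder : ∀ t ∈ I, HasDerivWithinAt
      (fun t => F (Function.update q 0 t) - G (Function.update q 0 t)) 0 I t := by
    intro t ht
    have hm := hprod2 q hq t ht
    have h1 := hasDerivAt_updF (F := F) (q := q) (t := t)
      ((hF.contDiffAt (hΩ.mem_nhds hm)).differentiableAt (by simp))
    have h2 := hasDerivAt_updF (F := G) (q := q) (t := t)
      ((hG.contDiffAt (hΩ.mem_nhds hm)).differentiableAt (by simp))
    have := (h1.sub h2).hasDerivWithinAt (s := I)
    rw [hd _ hm, sub_self] at this
    exact this
  have := Convex.norm_image_sub_le_of_norm_hasDerivWithin_le (C := 0) hder (by simp)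
    hIconn.convex hI0 (hprod1 q hq)
  rw [zero_mul, norm_le_zero_iff, Function.update_eq_self,
    hs _ (hprod2 q hq 0 hI0) (by simp)] at this
  linarith

theorem pd_comp {n : ℕ} {f : (Fin n → ℝ) → ℝ} {φ : (Fin n → ℝ) → (Fin n → ℝ)} {q : Fin n → ℝ}
    (hf : DifferentiableAt ℝ f (φ q)) (hφ : ∀ m, DifferentiableAt ℝ (fun p => φ p m) q)
    (i : Fin n) :
    pd i (fun p => f (φ p)) q = ∑ m, pd m f (φ q) * pd i (fun p => φ p m) q := by
  have hφ' : HasFDerivAt φ (ContinuousLinearMap.pi fun m => fderiv ℝ (fun p => φ p m) q) q :=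
    hasFDerivAt_pi.2 fun m => (hφ m).hasFDerivAt
  have h := hf.hasFDerivAt.comp q hφ'
  have h2 : pd i (fun p => f (φ p)) q = fderiv ℝ f (φ q) (fun m => pd i (fun p => φ p m) q) := by
    unfold pd
    have := h.fderiv
    simp only [Function.comp_def] at this
    rw [this]; rfl
  rw [h2, pi_eq_sum_univ' (fun m => pd i (fun p => φ p m) q), map_sum]
  refine Finset.sum_congr rfl fun m _ => ?_
  rw [map_smul, smul_eq_mul, mul_comm]
  unfold pd
  congr 2

theorem pd_contDiffOn {n : ℕ} {f : (Fin n → ℝ) → ℝ} {U : Set (Fin n → ℝ)} (hU : IsOpen U)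
    (hf : ContDiffOn ℝ (⊤ : ℕ∞) f U) (k : Fin n) : ContDiffOn ℝ (⊤ : ℕ∞) (pd k f) U :=
  (hf.fderiv_of_isOpen hU (m := (⊤ : ℕ∞)) (by simp)).clm_apply contDiffOn_const

theorem pd_comm {n : ℕ} {f : (Fin n → ℝ) → ℝ} {U : Set (Fin n → ℝ)} (hU : IsOpen U)
    (hf : ContDiffOn ℝ (⊤ : ℕ∞) f U) {x : Fin n → ℝ} (hx : x ∈ U) (i j : Fin n) :
    pd i (pd j f) x = pd j (pd i f) x := by
  have hd : DifferentiableAt ℝ (fderiv ℝ f) x :=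
    ((hf.fderiv_of_isOpen hU (m := (⊤ : ℕ∞)) (by simp)).contDiffAt
      (hU.mem_nhds hx)).differentiableAt (by simp)
  have key : ∀ a b : Fin n, pd a (pd b f) x =
      fderiv ℝ (fderiv ℝ f) x (Pi.single a 1) (Pi.single b 1) := by
    intro a b
    have h := hd.hasFDerivAt.clm_apply (hasFDerivAt_const (Pi.single b (1:ℝ)) x)
    have h' : HasFDerivAt (pd b f) _ x := h
    rw [pd, h'.fderiv]
    simp
  rw [key, key]
  exact (hf.contDiffAt (hU.mem_nhds hx)).isSymmSndFDerivAt
    (by rw [minSmoothness_of_isRCLikeNormedField]; exact WithTop.coe_le_coe.2 (le_top : (2:ℕ∞) ≤ ⊤)) _ _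

theorem pd_congr {n : ℕ} {f f' : (Fin n → ℝ) → ℝ} {U : Set (Fin n → ℝ)} (hU : IsOpen U)
    (h : ∀ x ∈ U, f x = f' x) {x : Fin n → ℝ} (hx : x ∈ U) (k : Fin n) : pd k f x = pd k f' x := by
  unfold pd
  rw [Filter.EventuallyEq.fderiv_eq (Filter.eventuallyEq_of_mem (hU.mem_nhds hx) h)]

theorem pd_mul {n : ℕ} {f h : (Fin n → ℝ) → ℝ} {x : Fin n → ℝ} (hf : DifferentiableAt ℝ f x)
    (hh : DifferentiableAt ℝ h x) (k : Fin n) :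
    pd k (fun y => f y * h y) x = pd k f x * h x + f x * pd k h x := by
  unfold pd
  rw [fderiv_fun_mul hf hh]
  simp
  ring

theorem pd_add {n : ℕ} {f h : (Fin n → ℝ) → ℝ} {x : Fin n → ℝ} (hf : DifferentiableAt ℝ f x)
    (hh : DifferentiableAt ℝ h x) (k : Fin n) :
    pd k (fun y => f y + h y) x = pd k f x + pd k h x := by
  unfold pd
  rw [fderiv_fun_add hf hh]
  simp

theorem pd_sum {n : ℕ} {ι : Type} {s : Finset ι} {f : ι → (Fin n → ℝ) → ℝ} {x : Fin n → ℝ}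
    (hf : ∀ a ∈ s, DifferentiableAt ℝ (f a) x) (k : Fin n) :
    pd k (fun y => ∑ a ∈ s, f a y) x = ∑ a ∈ s, pd k (f a) x := by
  unfold pd
  rw [fderiv_fun_sum hf]
  simp

theorem pd_coord {n : ℕ} (i k : Fin n) (x : Fin n → ℝ) :
    pd k (fun p => p i) x = if i = k then 1 else 0 := by
  unfold pd
  have : HasFDerivAt (fun p : Fin n → ℝ => p i)
      (ContinuousLinearMap.proj (R := ℝ) (φ := fun _ : Fin n => ℝ) i) x :=
    (ContinuousLinearMap.proj (R := ℝ) (φ := fun _ : Fin n => ℝ) i).hasFDerivAt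
  rw [this.fderiv]
  simp [Pi.single_apply]

/-- Jacobian matrix. -/
noncomputable def jac {n : ℕ} (φ : (Fin n → ℝ) → (Fin n → ℝ)) (q : Fin n → ℝ) :
    Matrix (Fin n) (Fin n) ℝ := Matrix.of fun k i => pd i (fun p => φ p k) q

theorem conj_sum {n : ℕ} (A J : Matrix (Fin n) (Fin n) ℝ) (i j : Fin n) :
    ∑ k, ∑ l, A k l * J k i * J l j = (J.transpose * A * J) i j := by
  simp only [Matrix.mul_apply, Matrix.transpose_apply, Finset.sum_mul]
  rw [Finset.sum_comm]
  refine Finset.sum_congr rfl fun l _ => Finset.sum_congr rfl fun k _ => ?_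
  ring

theorem conj_inj {n : ℕ} {A B J K : Matrix (Fin n) (Fin n) ℝ} (hJK : J * K = 1)
    (h : ∀ i j, ∑ k, ∑ l, A k l * J k i * J l j = ∑ k, ∑ l, B k l * J k i * J l j) : A = B := by
  have h' : J.transpose * A * J = J.transpose * B * J := by
    ext i j; rw [← conj_sum, ← conj_sum]; exact h i j
  have hT : K.transpose * J.transpose = 1 := by
    rw [← Matrix.transpose_mul, hJK, Matrix.transpose_one]
  have key : ∀ C : Matrix (Fin n) (Fin n) ℝ,
      K.transpose * (J.transpose * C * J) * K = C := by
    intro C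
    calc K.transpose * (J.transpose * C * J) * K
        = (K.transpose * J.transpose) * C * (J * K) := by simp only [Matrix.mul_assoc]
      _ = C := by rw [hT, hJK]; simp
  rw [← key A, ← key B, h']

theorem jac_mul {n : ℕ} {U Ω : Set (Fin n → ℝ)} (hU : IsOpen U) (hΩ : IsOpen Ω)
    {y xof : (Fin n → ℝ) → (Fin n → ℝ)}
    (hy : ∀ j, ContDiffOn ℝ (⊤ : ℕ∞) (fun x => y x j) U)
    (hxof : ∀ j, ContDiffOn ℝ (⊤ : ℕ∞) (fun q => xof q j) Ω)
    (hright : ∀ q ∈ Ω, xof q ∈ U ∧ y (xof q) = q) {q : Fin n → ℝ} (hq : q ∈ Ω) :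
    jac y (xof q) * jac xof q = 1 := by
  ext i j
  rw [Matrix.mul_apply]
  have h := pd_comp (f := fun x => y x i) (φ := xof) (q := q)
    (((hy i).contDiffAt (hU.mem_nhds (hright q hq).1)).differentiableAt (by simp))
    (fun m => ((hxof m).contDiffAt (hΩ.mem_nhds hq)).differentiableAt (by simp)) j
  simp only [jac, Matrix.of_apply]
  rw [← h, pd_congr hΩ (f' := fun p => p i) (fun x hx => by rw [(hright x hx).2]) hq, pd_coord,
    Matrix.one_apply]

theorem transport {n : ℕ} {U Ω : Set (Fin (n+1) → ℝ)} (hU : IsOpen U) (hΩ : IsOpen Ω)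
    {xof : (Fin (n+1) → ℝ) → (Fin (n+1) → ℝ)} {lam : (Fin (n+1) → ℝ) → Fin (n+1) → ℝ}
    (hlam : ∀ i, ContDiffOn ℝ (⊤ : ℕ∞) (fun x => lam x i) U)
    (hxof : ∀ j, ContDiffOn ℝ (⊤ : ℕ∞) (fun q => xof q j) Ω)
    (hmem : ∀ q ∈ Ω, xof q ∈ U)
    (hxl : ∀ q ∈ Ω, ∀ k, pd 0 (fun p => xof p k) q = lam (xof q) k)
    {a : (Fin (n+1) → ℝ) → Matrix (Fin (n+1)) (Fin (n+1)) ℝ}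
    (ha : ∀ i j, ContDiffOn ℝ (⊤ : ℕ∞) (fun x => a x i j) U)
    (hsym : ∀ x ∈ U, (a x).IsSymm)
    {q : Fin (n+1) → ℝ} (hq : q ∈ Ω) (i j : Fin (n+1)) :
    pd 0 (fun q => ∑ k, ∑ l, a (xof q) k l *
        pd i (fun p => xof p k) q * pd j (fun p => xof p l) q) q
      = ∑ k, ∑ l, (∑ m, lam (xof q) m * pd m (fun x => a x k l) (xof q)
          + ∑ m, pd k (fun x => lam x m) (xof q) * a (xof q) m l
          + ∑ m, pd l (fun x => lam x m) (xof q) * a (xof q) m k) *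
        pd i (fun p => xof p k) q * pd j (fun p => xof p l) q := by
  have hxd : ∀ m, DifferentiableAt ℝ (fun p => xof p m) q := fun m =>
    ((hxof m).contDiffAt (hΩ.mem_nhds hq)).differentiableAt (by simp)
  have hUd : ∀ {f : (Fin (n+1) → ℝ) → ℝ}, ContDiffOn ℝ (⊤ : ℕ∞) f U →
      DifferentiableAt ℝ f (xof q) := fun hf =>
    (hf.contDiffAt (hU.mem_nhds (hmem q hq))).differentiableAt (by simp)
  have hxv : DifferentiableAt ℝ xof q := differentiableAt_pi.2 hxd
  have had : ∀ k l, DifferentiableAt ℝ (fun p => a (xof p) k l) q := fun k l =>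
    (hUd (ha k l)).comp q hxv
  have hJd : ∀ k i, DifferentiableAt ℝ (fun q => pd i (fun p => xof p k) q) q := fun k i =>
    ((pd_contDiffOn hΩ (hxof k) i).contDiffAt (hΩ.mem_nhds hq)).differentiableAt (by simp)
  have hJ0 : ∀ k i, pd 0 (fun q => pd i (fun p => xof p k) q) q =
      ∑ m, pd m (fun x => lam x k) (xof q) * pd i (fun p => xof p m) q := by
    intro k i
    have h1 := pd_comm hΩ (hxof k) hq 0 i
    refine h1.trans ?_
    rw [pd_congr hΩ (f' := fun p => lam (xof p) k) (fun x hx => hxl x hx k) hq]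
    exact pd_comp (f := fun x => lam x k) (hUd (hlam k)) hxd i
  have ha0 : ∀ k l, pd 0 (fun p => a (xof p) k l) q =
      ∑ m, pd m (fun x => a x k l) (xof q) * lam (xof q) m := by
    intro k l
    rw [pd_comp (f := fun x => a x k l) (hUd (ha k l)) hxd 0]
    exact Finset.sum_congr rfl fun m _ => by rw [hxl q hq]
  rw [pd_sum (fun k _ => DifferentiableAt.fun_sum fun l _ =>
    ((had k l).fun_mul (hJd k i)).fun_mul (hJd l j))]
  have step : ∀ k, pd 0 (fun q => ∑ l, a (xof q) k l *
        pd i (fun p => xof p k) q * pd j (fun p => xof p l) q) q =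
      ∑ l, (((∑ m, pd m (fun x => a x k l) (xof q) * lam (xof q) m) * pd i (fun p => xof p k) q
        + a (xof q) k l * (∑ m, pd m (fun x => lam x k) (xof q) * pd i (fun p => xof p m) q))
          * pd j (fun p => xof p l) q
        + a (xof q) k l * pd i (fun p => xof p k) q *
          (∑ m, pd m (fun x => lam x l) (xof q) * pd j (fun p => xof p m) q)) := by
    intro k
    rw [pd_sum (fun l _ => ((had k l).fun_mul (hJd k i)).fun_mul (hJd l j))]
    refine Finset.sum_congr rfl fun l _ => ?_
    rw [pd_mul ((had k l).fun_mul (hJd k i)) (hJd l j), pd_mul (had k l) (hJd k i), hJ0, hJ0, ha0]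
  simp only [step]
  simp only [add_mul, Finset.sum_add_distrib, Finset.mul_sum, Finset.sum_mul]
  congr 1
  · congr 1
    · refine Finset.sum_congr rfl fun k _ => Finset.sum_congr rfl fun l _ =>
        Finset.sum_congr rfl fun m _ => ?_
      ring
    · have h1 : ∀ F : Fin (n+1) → Fin (n+1) → Fin (n+1) → ℝ,
          ∑ k, ∑ l, ∑ m, F k l m = ∑ k, ∑ l, ∑ m, F m l k := by
        intro F
        rw [Finset.sum_comm]
        rw [Finset.sum_comm (f := fun k l => ∑ m, F m l k)]
        refine Finset.sum_congr rfl fun l _ => ?_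
        rw [Finset.sum_comm]
      rw [h1]
      refine Finset.sum_congr rfl fun k _ => Finset.sum_congr rfl fun l _ =>
        Finset.sum_congr rfl fun m _ => ?_
      ring
  · refine Finset.sum_congr rfl fun k _ => ?_
    rw [Finset.sum_comm]
    refine Finset.sum_congr rfl fun l _ => Finset.sum_congr rfl fun m _ => ?_
    rw [← (hsym _ (hmem q hq)).apply k m]
    ring

/-- **Theorem 3.3.**  Given a non-zero solution of the λ-equations (`m = 1`),
straightened by a diffeomorphism `y` with product image `Ω = I × Σ'`, the
ĝ- and V̂-equations have a unique solution with prescribed initial data on the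
slice `Σ = {y¹ = 0}`. -/
theorem ghat_Vhat_unique_solution_with_initial_data
    {n : ℕ} (U : Set (Fin (n+1) → ℝ)) (hUopen : IsOpen U)
    (g : (Fin (n+1) → ℝ) → Matrix (Fin (n+1)) (Fin (n+1)) ℝ)
    (hg : ∀ i j, ContDiffOn ℝ (⊤ : ℕ∞) (fun x => g x i j) U)
    (hgsym : ∀ x ∈ U, (g x).IsSymm)
    (hginv : ∀ x ∈ U, IsUnit (g x).det)
    (V : (Fin (n+1) → ℝ) → ℝ) (hV : ContDiffOn ℝ (⊤ : ℕ∞) V U)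
    (lam : (Fin (n+1) → ℝ) → Fin (n+1) → ℝ)
    (hlam : ∀ i, ContDiffOn ℝ (⊤ : ℕ∞) (fun x => lam x i) U)
    (hlamne : ∀ x ∈ U, lam x ≠ 0)
    -- λ solves the λ-equations
    (hlamEq : ∀ x ∈ U, ∀ k, pd k (fun q => ∑ i, g q 0 i * lam q i) x
        - 2 * ∑ i, chr g k 0 i x * lam x i = 0)
    -- y : U → Ω is a diffeomorphism with inverse xof
    (Ω : Set (Fin (n+1) → ℝ)) (hΩopen : IsOpen Ω)
    (y xof : (Fin (n+1) → ℝ) → (Fin (n+1) → ℝ))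
    (hy : ∀ j, ContDiffOn ℝ (⊤ : ℕ∞) (fun x => y x j) U)
    (hxof : ∀ j, ContDiffOn ℝ (⊤ : ℕ∞) (fun q => xof q j) Ω)
    (himg : y '' U = Ω)
    (hleft : ∀ x ∈ U, xof (y x) = x)
    (hright : ∀ q ∈ Ω, xof q ∈ U ∧ y (xof q) = q)
    -- y straightens λ : λ^i ∂y^j/∂x^i = δ_1^j
    (hstraight : ∀ x ∈ U, ∀ j,
      ∑ i, lam x i * pd i (fun w => y w j) x = if j = 0 then 1 else 0)
    -- Ω = I × Σ' with I ∋ 0 an interval, and the slice Σ = {y¹ = 0} is nonempty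
    (I : Set ℝ) (hI0 : (0 : ℝ) ∈ I) (hIconn : I.OrdConnected)
    (hprod1 : ∀ q ∈ Ω, q 0 ∈ I)
    (hprod2 : ∀ q ∈ Ω, ∀ t ∈ I, Function.update q 0 t ∈ Ω)
    (hslice : {q ∈ Ω | q 0 = 0}.Nonempty)
    -- smooth symmetric matrix initial data Ĝ⁰ and scalar initial data V̂⁰ on Σ
    (G0 : (Fin (n+1) → ℝ) → Matrix (Fin (n+1)) (Fin (n+1)) ℝ)
    (hG0 : ∀ i j, ContDiffOn ℝ (⊤ : ℕ∞) (fun q => G0 q i j) {q ∈ Ω | q 0 = 0})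
    (hG0sym : ∀ q ∈ {q ∈ Ω | q 0 = 0}, (G0 q).IsSymm)
    (V0 : (Fin (n+1) → ℝ) → ℝ)
    (hV0 : ContDiffOn ℝ (⊤ : ℕ∞) V0 {q ∈ Ω | q 0 = 0}) :
    ∃ ghat : (Fin (n+1) → ℝ) → Matrix (Fin (n+1)) (Fin (n+1)) ℝ,
    ∃ Vhat : (Fin (n+1) → ℝ) → ℝ,
      ((∀ i j, ContDiffOn ℝ (⊤ : ℕ∞) (fun x => ghat x i j) U) ∧
       (∀ x ∈ U, (ghat x).IsSymm) ∧
       ContDiffOn ℝ (⊤ : ℕ∞) Vhat U ∧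
       -- the ĝ-equations
       (∀ x ∈ U, ∀ i j,
          ∑ l, lam x l * pd l (fun q => ghat q i j) x
          + ∑ l, pd i (fun q => lam q l) x * ghat x l j
          + ∑ l, pd j (fun q => lam q l) x * ghat x l i
          = pd 0 (fun q => g q i j) x) ∧
       -- the V̂-equation
       (∀ x ∈ U, ∑ j, lam x j * pd j Vhat x = pd 0 V x) ∧
       -- the y-coordinate representatives restrict to Ĝ⁰ and V̂⁰ on the slice Σ
       (∀ q ∈ {q ∈ Ω | q 0 = 0},
          (∀ i j, ∑ k, ∑ l, ghat (xof q) k l *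
              pd i (fun p => xof p k) q * pd j (fun p => xof p l) q = G0 q i j) ∧
          Vhat (xof q) = V0 q)) ∧
      -- uniqueness
      (∀ ghat' : (Fin (n+1) → ℝ) → Matrix (Fin (n+1)) (Fin (n+1)) ℝ,
       ∀ Vhat' : (Fin (n+1) → ℝ) → ℝ,
        ((∀ i j, ContDiffOn ℝ (⊤ : ℕ∞) (fun x => ghat' x i j) U) ∧
         (∀ x ∈ U, (ghat' x).IsSymm) ∧
         ContDiffOn ℝ (⊤ : ℕ∞) Vhat' U ∧
         (∀ x ∈ U, ∀ i j,
            ∑ l, lam x l * pd l (fun q => ghat' q i j) x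
            + ∑ l, pd i (fun q => lam q l) x * ghat' x l j
            + ∑ l, pd j (fun q => lam q l) x * ghat' x l i
            = pd 0 (fun q => g q i j) x) ∧
         (∀ x ∈ U, ∑ j, lam x j * pd j Vhat' x = pd 0 V x) ∧
         (∀ q ∈ {q ∈ Ω | q 0 = 0},
            (∀ i j, ∑ k, ∑ l, ghat' (xof q) k l *
                pd i (fun p => xof p k) q * pd j (fun p => xof p l) q = G0 q i j) ∧
            Vhat' (xof q) = V0 q)) →
        (∀ x ∈ U, ghat' x = ghat x ∧ Vhat' x = Vhat x)) := by
  have hyd : ContDiffOn ℝ (⊤ : ℕ∞) y U := contDiffOn_pi.2 hy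
  have hxd : ContDiffOn ℝ (⊤ : ℕ∞) xof Ω := contDiffOn_pi.2 hxof
  have hmem : ∀ q ∈ Ω, xof q ∈ U := fun q hq => (hright q hq).1
  have hymem : ∀ x ∈ U, y x ∈ Ω := fun x hx => himg ▸ Set.mem_image_of_mem y hx
  have hKJ : ∀ q ∈ Ω, jac y (xof q) * jac xof q = 1 := fun q hq =>
    jac_mul hUopen hΩopen hy hxof hright hq
  have hJK : ∀ q ∈ Ω, jac xof q * jac y (xof q) = 1 := fun q hq =>
    mul_eq_one_comm.1 (hKJ q hq)
  have hxl : ∀ q ∈ Ω, ∀ k, pd 0 (fun p => xof p k) q = lam (xof q) k := by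
    intro q hq k
    have h1 : (jac y (xof q)).mulVec (lam (xof q)) = Pi.single 0 1 := by
      funext j
      have := hstraight _ (hmem q hq) j
      simp only [Matrix.mulVec, dotProduct, jac, Matrix.of_apply, Pi.single_apply]
      rw [← this]
      exact Finset.sum_congr rfl fun i _ => mul_comm _ _
    have h2 : lam (xof q) = (jac xof q).mulVec (Pi.single 0 1) := by
      rw [← h1, Matrix.mulVec_mulVec, hJK q hq, Matrix.one_mulVec]
    rw [h2]
    simp [jac]
  -- the scalar transport identity
  have hVt : ∀ W : (Fin (n+1) → ℝ) → ℝ, ContDiffOn ℝ (⊤ : ℕ∞) W U → ∀ q ∈ Ω,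
      pd 0 (fun p => W (xof p)) q = ∑ j, lam (xof q) j * pd j W (xof q) := by
    intro W hW q hq
    rw [pd_comp ((hW.contDiffAt (hUopen.mem_nhds (hmem q hq))).differentiableAt (by simp))
      (fun m => ((hxof m).contDiffAt (hΩopen.mem_nhds hq)).differentiableAt (by simp)) 0]
    exact Finset.sum_congr rfl fun m _ => by rw [hxl q hq, mul_comm]
  -- smoothness of representatives
  have hrep : ∀ a : (Fin (n+1) → ℝ) → Matrix (Fin (n+1)) (Fin (n+1)) ℝ,
      (∀ i j, ContDiffOn ℝ (⊤ : ℕ∞) (fun x => a x i j) U) → ∀ i j,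
      ContDiffOn ℝ (⊤ : ℕ∞) (fun q => ∑ k, ∑ l, a (xof q) k l *
        pd i (fun p => xof p k) q * pd j (fun p => xof p l) q) Ω := by
    intro a ha i j
    refine ContDiffOn.sum fun k _ => ContDiffOn.sum fun l _ => ?_
    exact (((ha k l).comp hxd hmem).mul (pd_contDiffOn hΩopen (hxof k) i)).mul
      (pd_contDiffOn hΩopen (hxof l) j)
  -- initial data transported along the lines
  have hupd0 : ContDiffOn ℝ (⊤ : ℕ∞)
      (fun q : Fin (n+1) → ℝ => (Function.update q 0 0 : Fin (n+1) → ℝ)) Ω :=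
    (update_contDiff.comp (contDiff_id.prodMk contDiff_const)).contDiffOn
  have hupdm : Set.MapsTo (fun q : Fin (n+1) → ℝ => (Function.update q 0 0 : Fin (n+1) → ℝ)) Ω
      {q ∈ Ω | q 0 = 0} := fun q hq => ⟨hprod2 q hq 0 hI0, by simp⟩
  have hpd0 : ∀ W : (Fin (n+1) → ℝ) → ℝ, ∀ q ∈ Ω,
      DifferentiableAt ℝ (fun q : Fin (n+1) → ℝ => W (Function.update q 0 0)) q →
      pd 0 (fun q : Fin (n+1) → ℝ => W (Function.update q 0 0)) q = 0 := by
    intro W q hq hd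
    have h1 := hasDerivAt_updF (F := fun q : Fin (n+1) → ℝ => W (Function.update q 0 0))
      (q := q) (t := q 0) (by rwa [Function.update_eq_self])
    simp only [Function.update_idem, Function.update_eq_self] at h1
    exact h1.unique (hasDerivAt_const _ _)
  -- general solution of `∂₀ F = h`
  have hsol : ∀ (W h : (Fin (n+1) → ℝ) → ℝ), ContDiffOn ℝ (⊤ : ℕ∞) W {q ∈ Ω | q 0 = 0} →
      ContDiffOn ℝ (⊤ : ℕ∞) h Ω → ∃ F : (Fin (n+1) → ℝ) → ℝ, ContDiffOn ℝ (⊤ : ℕ∞) F Ω ∧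
        (∀ q ∈ Ω, pd 0 F q = h q) ∧ ∀ q ∈ Ω, q 0 = 0 → F q = W q := by
    intro W h hW hh
    have s1 : ContDiffOn ℝ (⊤ : ℕ∞)
        (fun q : Fin (n+1) → ℝ => W (Function.update q 0 0)) Ω := hW.comp hupd0 hupdm
    have s2 := adv_contDiffOn hΩopen hI0 hIconn hprod1 hprod2 hh
    refine ⟨fun q => W (Function.update q 0 0) + adv h q, s1.add s2, ?_, ?_⟩
    · intro q hq
      have d1 := (s1.contDiffAt (hΩopen.mem_nhds hq)).differentiableAt (by simp)
      have d2 := (s2.contDiffAt (hΩopen.mem_nhds hq)).differentiableAt (by simp)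
      rw [pd_add d1 d2, hpd0 W q hq d1, pd_adv hΩopen hI0 hIconn hprod1 hprod2 hh hq, zero_add]
    · intro q hq h0
      have : Function.update q 0 0 = q := by rw [← h0, Function.update_eq_self]
      simp only [this, adv_slice h h0, add_zero]
  have huniq : ∀ F G : (Fin (n+1) → ℝ) → ℝ, ContDiffOn ℝ (⊤ : ℕ∞) F Ω →
      ContDiffOn ℝ (⊤ : ℕ∞) G Ω → (∀ q ∈ Ω, pd 0 F q = pd 0 G q) →
      (∀ q ∈ Ω, q 0 = 0 → F q = G q) → ∀ q ∈ Ω, F q = G q := fun F G hF hG hd hs q hq =>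
    eq_of_pd_eq hΩopen hI0 hIconn hprod1 hprod2 hF hG hd hs hq
  have hgd : ∀ i j, ContDiffOn ℝ (⊤ : ℕ∞)
      (fun x => (Matrix.of fun i j => pd 0 (fun q => g q i j) x) i j) U := fun i j =>
    pd_contDiffOn hUopen (hg i j) 0
  have hgdsym : ∀ x ∈ U, ∀ i j, pd 0 (fun q => g q i j) x = pd 0 (fun q => g q j i) x :=
    fun x hx i j => pd_congr hUopen (fun z hz => (hgsym z hz).apply j i) hx 0
  have hH := hrep (fun x => Matrix.of fun i j => pd 0 (fun q => g q i j) x) hgd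
  choose G hGs hGd hGi using fun i j => hsol (fun q => G0 q i j) _ (hG0 i j) (hH i j)
  obtain ⟨Vt, hVs, hVd, hVi⟩ := hsol V0 (fun q => pd 0 V (xof q)) hV0
    ((pd_contDiffOn hUopen hV 0).comp hxd hmem)
  have hGsym : ∀ i j, ∀ q ∈ Ω, G i j q = G j i q := by
    intro i j
    refine huniq _ _ (hGs i j) (hGs j i) ?_ ?_
    · intro q hq
      rw [hGd i j q hq, hGd j i q hq, Finset.sum_comm]
      refine Finset.sum_congr rfl fun k _ => Finset.sum_congr rfl fun l _ => ?_
      simp only [Matrix.of_apply]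
      rw [hgdsym _ (hmem q hq) l k]
      ring
    · intro q hq h0
      rw [hGi i j q hq h0, hGi j i q hq h0]
      exact (hG0sym q ⟨hq, h0⟩).apply j i
  let gh : (Fin (n+1) → ℝ) → Matrix (Fin (n+1)) (Fin (n+1)) ℝ := fun x =>
    (jac y x).transpose * (Matrix.of fun i j => G i j (y x)) * jac y x
  have hghs : ∀ i j, ContDiffOn ℝ (⊤ : ℕ∞) (fun x => gh x i j) U := by
    intro i j
    have : ContDiffOn ℝ (⊤ : ℕ∞) (fun x => ∑ k, ∑ l, G k l (y x) *
        pd i (fun p => y p k) x * pd j (fun p => y p l) x) U := by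
      refine ContDiffOn.sum fun k _ => ContDiffOn.sum fun l _ => ?_
      exact (((hGs k l).comp hyd hymem).mul (pd_contDiffOn hUopen (hy k) i)).mul
        (pd_contDiffOn hUopen (hy l) j)
    refine this.congr fun x hx => ?_
    exact (conj_sum (Matrix.of fun i j => G i j (y x)) (jac y x) i j).symm
  have hghsym : ∀ x ∈ U, (gh x).IsSymm := by
    intro x hx
    have hM : (Matrix.of fun i j => G i j (y x)).transpose = Matrix.of fun i j => G i j (y x) := by
      ext i j
      exact hGsym j i _ (hymem x hx)
    simp only [gh, Matrix.IsSymm, Matrix.transpose_mul, Matrix.transpose_transpose, hM,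
      Matrix.mul_assoc]
  have hghrep : ∀ q ∈ Ω, ∀ i j, ∑ k, ∑ l, gh (xof q) k l *
      pd i (fun p => xof p k) q * pd j (fun p => xof p l) q = G i j q := by
    intro q hq i j
    refine (conj_sum (gh (xof q)) (jac xof q) i j).trans ?_
    have hT : (jac xof q).transpose * (jac y (xof q)).transpose = 1 := by
      rw [← Matrix.transpose_mul, hKJ q hq, Matrix.transpose_one]
    have : (jac xof q).transpose * gh (xof q) * jac xof q = Matrix.of fun i j => G i j q := by
      simp only [gh, (hright q hq).2]
      calc _ = ((jac xof q).transpose * (jac y (xof q)).transpose) *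
            (Matrix.of fun i j => G i j q) * (jac y (xof q) * jac xof q) := by
              simp only [Matrix.mul_assoc]
        _ = _ := by rw [hT, hKJ q hq]; simp
    rw [this]; rfl
  have hVhs : ContDiffOn ℝ (⊤ : ℕ∞) (fun x => Vt (y x)) U := hVs.comp hyd hymem
  refine ⟨gh, fun x => Vt (y x), ⟨hghs, hghsym, hVhs, ?_, ?_, ?_⟩, ?_⟩
  · intro x hx
    have hq := hymem x hx
    have hc := conj_inj (A := Matrix.of fun i j =>
          ∑ l, lam (xof (y x)) l * pd l (fun q => gh q i j) (xof (y x))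
          + ∑ l, pd i (fun q => lam q l) (xof (y x)) * gh (xof (y x)) l j
          + ∑ l, pd j (fun q => lam q l) (xof (y x)) * gh (xof (y x)) l i)
      (B := Matrix.of fun i j => pd 0 (fun q => g q i j) (xof (y x))) (hJK _ hq) (by
        intro i j
        refine (transport hUopen hΩopen hlam hxof hmem hxl hghs hghsym hq i j).symm.trans ?_
        rw [pd_congr hΩopen (fun q hq => hghrep q hq i j) hq]
        exact hGd i j _ hq)
    rw [hleft x hx] at hc
    intro i j
    exact congrFun (congrFun hc i) j
  · intro x hx
    have h1 := hVt _ hVhs _ (hymem x hx)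
    rw [pd_congr hΩopen (f' := Vt) (fun q hq => by rw [(hright q hq).2]) (hymem x hx),
      hVd _ (hymem x hx), hleft x hx] at h1
    exact h1.symm
  · rintro q ⟨hq, h0⟩
    refine ⟨fun i j => ?_, ?_⟩
    · rw [hghrep q hq, hGi i j q hq h0]
    · simp only [(hright q hq).2]
      exact hVi q hq h0
  · rintro gh' Vh' ⟨hs', hsym', hVs', heq', hVeq', hini'⟩ x hx
    constructor
    · have hq := hymem x hx
      have hc : gh' (xof (y x)) = gh (xof (y x)) := by
        refine conj_inj (hJK _ hq) fun i j => ?_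
        refine Eq.trans ?_ (hghrep _ hq i j).symm
        refine huniq _ _ (hrep gh' hs' i j) (hGs i j) ?_ ?_ _ hq
        · intro q hq
          rw [transport hUopen hΩopen hlam hxof hmem hxl hs' hsym' hq i j, hGd i j q hq]
          refine Finset.sum_congr rfl fun k _ => Finset.sum_congr rfl fun l _ => ?_
          rw [heq' _ (hmem q hq)]
          rfl
        · intro q hq h0
          rw [hGi i j q hq h0]
          exact (hini' q ⟨hq, h0⟩).1 i j
      rwa [hleft x hx] at hc
    · have := huniq (fun q => Vh' (xof q)) Vt (hVs'.comp hxd hmem) hVs (fun q hq => by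
          rw [hVt _ hVs' q hq, hVeq' _ (hmem q hq), hVd q hq])
        (fun q hq h0 => by rw [hVi q hq h0]; exact (hini' q ⟨hq, h0⟩).2) (y x) (hymem x hx)
      simpa only [hleft x hx] using this
end

section
/- For the inverted pendulum in a vertical plane with horizontally and vertically actuated base, with mass matrix g(x) given by g₁₁ = 1, g₁₂ = −a cos(x¹), g₁₃ = −a sin(x¹), g₂₂ = g₃₃ = 1, g₂₃ = 0 (0 < a < 1), the map λ = (λ¹, λ², λ³) with λ¹(x) = σ₀, λ²(x) = μ₀ cos(x¹), λ³(x) = 0 satisfies the λ-equations ∂(g_{1i}λ^i)/∂x^k − 2[k1,i]λ^i = 0 on ℝ³ for every k = 1,2,3 and every choice of constants σ₀, μ₀ ∈ ℝ. -/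
/-- Mass matrix of the inverted pendulum in a vertical plane. -/
noncomputable def gPend (a : ℝ) (x : Fin 3 → ℝ) : Matrix (Fin 3) (Fin 3) ℝ :=
  !![1, -a * Real.cos (x 0), -a * Real.sin (x 0);
     -a * Real.cos (x 0), 1, 0;
     -a * Real.sin (x 0), 0, 1]

lemma pd_comp_s5 (k : Fin 3) (F : ℝ → ℝ) (dF : ℝ) (x : Fin 3 → ℝ) (h : HasDerivAt F dF (x 0)) :
    pd k (fun y => F (y 0)) x = dF * (Pi.single k 1 : Fin 3 → ℝ) 0 := by
  have h1 : HasFDerivAt (fun y : Fin 3 → ℝ => y 0)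
      (ContinuousLinearMap.proj (R := ℝ) (φ := fun _ : Fin 3 => ℝ) 0) x :=
    (ContinuousLinearMap.proj (R := ℝ) (φ := fun _ : Fin 3 => ℝ) 0).hasFDerivAt
  have h2 := h.comp_hasFDerivAt x h1
  have h3 : pd k (F ∘ fun y : Fin 3 → ℝ => y 0) x = dF * (Pi.single k 1 : Fin 3 → ℝ) 0 := by
    unfold pd
    rw [h2.fderiv]
    simp
  exact h3

lemma pd_const (k : Fin 3) (c : ℝ) (x : Fin 3 → ℝ) : pd k (fun _ => c) x = 0 := by
  simp [pd]

/-- For the inverted pendulum in a vertical plane, `λ = (σ₀, μ₀ cos x¹, 0)`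
solves the λ-equations on all of ℝ³, for every σ₀, μ₀. -/
theorem pendulum_lambda_solution (a : ℝ) (ha : 0 < a) (ha1 : a < 1) (σ₀ μ₀ : ℝ) :
    ∀ (x : Fin 3 → ℝ) (k : Fin 3),
      pd k (fun y => ∑ i, gPend a y 0 i * ![σ₀, μ₀ * Real.cos (y 0), 0] i) x
        - 2 * ∑ i, chr (gPend a) k 0 i x * ![σ₀, μ₀ * Real.cos (x 0), 0] i = 0 := by
  intro x k
  have hc : ∀ k, pd k (fun y : Fin 3 → ℝ => -(a * Real.cos (y 0))) x
      = a * Real.sin (x 0) * (Pi.single k 1 : Fin 3 → ℝ) 0 := fun k =>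
    pd_comp_s5 k (fun t => -(a * Real.cos t)) _ x
      ((((Real.hasDerivAt_cos (x 0)).const_mul a).neg).congr_deriv (by ring))
  have hs : ∀ k, pd k (fun y : Fin 3 → ℝ => -(a * Real.sin (y 0))) x
      = -(a * Real.cos (x 0)) * (Pi.single k 1 : Fin 3 → ℝ) 0 := fun k =>
    pd_comp_s5 k (fun t => -(a * Real.sin t)) _ x
      (((Real.hasDerivAt_sin (x 0)).const_mul a).neg)
  have hm : ∀ k, pd k (fun y : Fin 3 → ℝ => σ₀ + -(a * Real.cos (y 0) * (μ₀ * Real.cos (y 0)))) x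
      = 2 * a * μ₀ * Real.cos (x 0) * Real.sin (x 0) * (Pi.single k 1 : Fin 3 → ℝ) 0 := fun k =>
    pd_comp_s5 k (fun t => σ₀ + -(a * Real.cos t * (μ₀ * Real.cos t))) _ x
      (HasDerivAt.congr_deriv
        (((((Real.hasDerivAt_cos (x 0)).const_mul a).mul
          ((Real.hasDerivAt_cos (x 0)).const_mul μ₀)).neg).const_add σ₀)
        (by ring))
  fin_cases k <;>
    simp [Fin.sum_univ_three, chr, gPend, hc, hs, hm, pd_const]
  all_goals ring
end

section
/- Consider the inverted pendulum mass matrix on ℝ³: g₁₁ = 1, g₁₂ = −a cos(x¹), g₁₃ = −a sin(x¹), g₂₂ = g₃₃ = 1, g₂₃ = 0, with 0 < a < 1, and let λ¹ = σ₀, λ² = μ₀ cos(x¹), λ³ = 0 with σ₀ ≠ 0. Let G₂₂, G₂₃, G₃₃ : ℝ² → ℝ be arbitrary smooth functions, and define the symmetric matrix-valued map ĝ on ℝ³ by: ĝ₂₂(x) = G₂₂(x² − (μ₀/σ₀) sin(x¹), x³), ĝ₂₃(x) = G₂₃(x² − (μ₀/σ₀) sin(x¹), x³), ĝ₃₃(x)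 = G₃₃(x² − (μ₀/σ₀) sin(x¹), x³), ĝ₁₂(x) = (−a cos(x¹) − μ₀ cos(x¹) ĝ₂₂(x))/σ₀, ĝ₁₃(x) = (−a sin(x¹) − μ₀ cos(x¹) ĝ₂₃(x))/σ₀, ĝ₁₁(x) = (1 − μ₀ cos(x¹) ĝ₁₂(x))/σ₀. Then ĝ satisfies the ĝ-equations λ^ℓ ∂ĝ_{ij}/∂x^ℓ + (∂λ^ℓ/∂x^i)ĝ_{ℓj} + (∂λ^ℓ/∂x^j)ĝ_{ℓi} = ∂g_{ij}/∂x¹ for all i,j = 1,2,3, and the compatibility relation g_{1i} = λ^j ĝ_{ji} holds for i = 1,2,3. -/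
/-- The matrix `ĝ` for the inverted pendulum, built from arbitrary smooth
functions `G22, G23, G33` of `(x² − (μ₀/σ₀) sin x¹, x³)`. -/
noncomputable def ghatPend (a σ₀ μ₀ : ℝ) (G22 G23 G33 : (Fin 2 → ℝ) → ℝ)
    (x : Fin 3 → ℝ) : Matrix (Fin 3) (Fin 3) ℝ :=
  let y := ![x 1 - (μ₀ / σ₀) * Real.sin (x 0), x 2]
  let g22 := G22 y
  let g23 := G23 y
  let g33 := G33 y
  let g12 := (-a * Real.cos (x 0) - μ₀ * Real.cos (x 0) * g22) / σ₀
  let g13 := (-a * Real.sin (x 0) - μ₀ * Real.cos (x 0) * g23) / σ₀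
  let g11 := (1 - μ₀ * Real.cos (x 0) * g12) / σ₀
  !![g11, g12, g13; g12, g22, g23; g13, g23, g33]


lemma pd_of_hasFDerivAt {n : ℕ} {f : (Fin n → ℝ) → ℝ} {f' : (Fin n → ℝ) →L[ℝ] ℝ}
    {x : Fin n → ℝ} (h : HasFDerivAt f f' x) (k : Fin n) :
    pd k f x = f' (Pi.single k 1) := by
  rw [pd, h.fderiv]

/-- Functions of `(x² − (μ₀/σ₀) sin x¹, x³)` are first integrals of `λ`. -/
lemma exists_deriv_comp (σ₀ μ₀ : ℝ) (hσ : σ₀ ≠ 0) (G : (Fin 2 → ℝ) → ℝ)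
    (hG : ContDiff ℝ (⊤ : ℕ∞) G) (x : Fin 3 → ℝ) :
    ∃ D : (Fin 3 → ℝ) →L[ℝ] ℝ,
      HasFDerivAt (fun y : Fin 3 → ℝ => G ![y 1 - (μ₀ / σ₀) * Real.sin (y 0), y 2]) D x ∧
      σ₀ * D (Pi.single 0 1) + μ₀ * Real.cos (x 0) * D (Pi.single 1 1) = 0 := by
  have h0 : ∀ i : Fin 3, HasFDerivAt (fun y : Fin 3 → ℝ => y i)
      (ContinuousLinearMap.proj (R := ℝ) (φ := fun _ : Fin 3 => ℝ) i) x := fun i =>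
    (ContinuousLinearMap.proj (R := ℝ) (φ := fun _ : Fin 3 => ℝ) i).hasFDerivAt
  let L0 : (Fin 3 → ℝ) →L[ℝ] ℝ :=
    ContinuousLinearMap.proj (R := ℝ) (φ := fun _ : Fin 3 => ℝ) 1 -
      (μ₀ / σ₀) • (Real.cos (x 0) • ContinuousLinearMap.proj (R := ℝ) (φ := fun _ : Fin 3 => ℝ) 0)
  let L1 : (Fin 3 → ℝ) →L[ℝ] ℝ := ContinuousLinearMap.proj (R := ℝ) (φ := fun _ : Fin 3 => ℝ) 2
  have hy : HasFDerivAt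
      (fun y : Fin 3 → ℝ => (![y 1 - (μ₀ / σ₀) * Real.sin (y 0), y 2] : Fin 2 → ℝ))
      (ContinuousLinearMap.pi ![L0, L1]) x := by
    rw [hasFDerivAt_pi']
    intro i
    fin_cases i
    · exact (h0 1).sub ((h0 0).sin.const_mul (μ₀ / σ₀))
    · exact h0 2
  have hd : DifferentiableAt ℝ G ![x 1 - (μ₀ / σ₀) * Real.sin (x 0), x 2] :=
    (hG.differentiable (by simp)).differentiableAt
  refine ⟨_, hd.hasFDerivAt.comp x hy, ?_⟩
  have key : ∀ (T : (Fin 3 → ℝ) →L[ℝ] ℝ) (c d : ℝ) (u v : Fin 3 → ℝ),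
      c * T u + d * T v = T (c • u + d • v) := by
    intro T c d u v
    simp
  rw [key]
  suffices hz : ContinuousLinearMap.pi ![L0, L1] (σ₀ • (Pi.single 0 1 : Fin 3 → ℝ) +
      (μ₀ * Real.cos (x 0)) • (Pi.single 1 1 : Fin 3 → ℝ)) = 0 by
    rw [ContinuousLinearMap.comp_apply, hz, map_zero]
  ext i
  fin_cases i
  · simp [L0]
    field_simp
    ring
  · simp [L1]

/-- The explicitly constructed `ĝ` satisfies the ĝ-equations for
`λ = (σ₀, μ₀ cos x¹, 0)` and the compatibility relation `g_{1i} = λ^j ĝ_{ji}`. -/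
theorem pendulum_ghat_solution (a σ₀ μ₀ : ℝ) (ha : 0 < a) (ha1 : a < 1) (hσ : σ₀ ≠ 0)
    (G22 G23 G33 : (Fin 2 → ℝ) → ℝ)
    (hG22 : ContDiff ℝ (⊤ : ℕ∞) G22) (hG23 : ContDiff ℝ (⊤ : ℕ∞) G23) (hG33 : ContDiff ℝ (⊤ : ℕ∞) G33) :
    -- the ĝ-equations
    (∀ (x : Fin 3 → ℝ) (i j : Fin 3),
      ∑ l, ![σ₀, μ₀ * Real.cos (x 0), 0] l *
          pd l (fun y => ghatPend a σ₀ μ₀ G22 G23 G33 y i j) x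
        + ∑ l, pd i (fun y => ![σ₀, μ₀ * Real.cos (y 0), 0] l) x *
            ghatPend a σ₀ μ₀ G22 G23 G33 x l j
        + ∑ l, pd j (fun y => ![σ₀, μ₀ * Real.cos (y 0), 0] l) x *
            ghatPend a σ₀ μ₀ G22 G23 G33 x l i
        = pd 0 (fun y => gPend a y i j) x) ∧
    -- the compatibility relation g_{1i} = λ^j ĝ_{ji}
    (∀ (x : Fin 3 → ℝ) (i : Fin 3),
      gPend a x 0 i =
        ∑ j, ![σ₀, μ₀ * Real.cos (x 0), 0] j * ghatPend a σ₀ μ₀ G22 G23 G33 x j i) := by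
  constructor
  · intro x i j
    obtain ⟨D2, h2, e2⟩ := exists_deriv_comp σ₀ μ₀ hσ G22 hG22 x
    obtain ⟨D3, h3, e3⟩ := exists_deriv_comp σ₀ μ₀ hσ G23 hG23 x
    obtain ⟨D4, h4, e4⟩ := exists_deriv_comp σ₀ μ₀ hσ G33 hG33 x
    have h0 : HasFDerivAt (fun y : Fin 3 → ℝ => y 0)
        (ContinuousLinearMap.proj (R := ℝ) (φ := fun _ : Fin 3 => ℝ) 0) x :=
      (ContinuousLinearMap.proj (R := ℝ) (φ := fun _ : Fin 3 => ℝ) 0).hasFDerivAt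
    have hc := h0.cos
    have hs := h0.sin
    have hμc := hc.const_mul μ₀
    have hac := hc.const_mul (-a)
    have has := hs.const_mul (-a)
    have h12 := (hac.sub (hμc.mul h2)).mul_const σ₀⁻¹
    have h13 := (has.sub (hμc.mul h3)).mul_const σ₀⁻¹
    have h11 := ((hμc.mul h12).const_sub 1).mul_const σ₀⁻¹
    set g2 := G22 ![x 1 - (μ₀ / σ₀) * Real.sin (x 0), x 2] with hg2
    set g3 := G23 ![x 1 - (μ₀ / σ₀) * Real.sin (x 0), x 2] with hg3
    set g4 := G33 ![x 1 - (μ₀ / σ₀) * Real.sin (x 0), x 2] with hg4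
    have pk (c : ℝ) (k : Fin 3) : pd k (fun _ : Fin 3 → ℝ => c) x = 0 := by
      simp [pd]
    have pμc (k : Fin 3) : pd k (fun y : Fin 3 → ℝ => μ₀ * Real.cos (y 0)) x =
        -(μ₀ * Real.sin (x 0) * (Pi.single k 1 : Fin 3 → ℝ) 0) := by
      rw [pd_of_hasFDerivAt hμc]; simp; try ring
    have pac (k : Fin 3) : pd k (fun y : Fin 3 → ℝ => -a * Real.cos (y 0)) x =
        a * Real.sin (x 0) * (Pi.single k 1 : Fin 3 → ℝ) 0 := by
      rw [pd_of_hasFDerivAt hac]; simp; try ring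
    have pas (k : Fin 3) : pd k (fun y : Fin 3 → ℝ => -a * Real.sin (y 0)) x =
        -(a * Real.cos (x 0) * (Pi.single k 1 : Fin 3 → ℝ) 0) := by
      rw [pd_of_hasFDerivAt has]; simp; try ring
    let gh := ghatPend a σ₀ μ₀ G22 G23 G33
    have p12 (k : Fin 3) : pd k (fun y => gh y 0 1) x =
        (a * Real.sin (x 0) * (Pi.single k 1 : Fin 3 → ℝ) 0
          + μ₀ * Real.sin (x 0) * (Pi.single k 1 : Fin 3 → ℝ) 0 * g2
          - μ₀ * Real.cos (x 0) * D2 (Pi.single k 1)) / σ₀ := by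
      refine (pd_of_hasFDerivAt (f := fun y => gh y 0 1) h12 k).trans ?_
      simp [← hg2]; ring
    have p13 (k : Fin 3) : pd k (fun y => gh y 0 2) x =
        (-(a * Real.cos (x 0) * (Pi.single k 1 : Fin 3 → ℝ) 0)
          + μ₀ * Real.sin (x 0) * (Pi.single k 1 : Fin 3 → ℝ) 0 * g3
          - μ₀ * Real.cos (x 0) * D3 (Pi.single k 1)) / σ₀ := by
      refine (pd_of_hasFDerivAt (f := fun y => gh y 0 2) h13 k).trans ?_
      simp [← hg3]; ring
    have p11 (k : Fin 3) : pd k (fun y => gh y 0 0) x =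
        (μ₀ * Real.sin (x 0) * (Pi.single k 1 : Fin 3 → ℝ) 0 *
            ((-a * Real.cos (x 0) - μ₀ * Real.cos (x 0) * g2) / σ₀)
          - μ₀ * Real.cos (x 0) * ((a * Real.sin (x 0) * (Pi.single k 1 : Fin 3 → ℝ) 0
          + μ₀ * Real.sin (x 0) * (Pi.single k 1 : Fin 3 → ℝ) 0 * g2
          - μ₀ * Real.cos (x 0) * D2 (Pi.single k 1)) / σ₀)) / σ₀ := by
      refine (pd_of_hasFDerivAt (f := fun y => gh y 0 0) h11 k).trans ?_
      simp [← hg2]; ring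
    have p22 (k : Fin 3) : pd k (fun y => gh y 1 1) x = D2 (Pi.single k 1) :=
      pd_of_hasFDerivAt (f := fun y => gh y 1 1) h2 k
    have p23 (k : Fin 3) : pd k (fun y => gh y 1 2) x = D3 (Pi.single k 1) :=
      pd_of_hasFDerivAt (f := fun y => gh y 1 2) h3 k
    have p33 (k : Fin 3) : pd k (fun y => gh y 2 2) x = D4 (Pi.single k 1) :=
      pd_of_hasFDerivAt (f := fun y => gh y 2 2) h4 k
    have p21 (k : Fin 3) : pd k (fun y => gh y 1 0) x = _ := p12 k
    have p31 (k : Fin 3) : pd k (fun y => gh y 2 0) x = _ := p13 k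
    have p32 (k : Fin 3) : pd k (fun y => gh y 2 1) x = _ := p23 k
    have v11 : gh x 0 0 =
      (1 - μ₀ * Real.cos (x 0) * ((-a * Real.cos (x 0) - μ₀ * Real.cos (x 0) * g2) / σ₀)) / σ₀ := rfl
    have v12 : gh x 0 1 = (-a * Real.cos (x 0) - μ₀ * Real.cos (x 0) * g2) / σ₀ := rfl
    have v13 : gh x 0 2 = (-a * Real.sin (x 0) - μ₀ * Real.cos (x 0) * g3) / σ₀ := rfl
    have v21 : gh x 1 0 = (-a * Real.cos (x 0) - μ₀ * Real.cos (x 0) * g2) / σ₀ := rfl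
    have v31 : gh x 2 0 = (-a * Real.sin (x 0) - μ₀ * Real.cos (x 0) * g3) / σ₀ := rfl
    have v22 : gh x 1 1 = g2 := rfl
    have v23 : gh x 1 2 = g3 := rfl
    have v32 : gh x 2 1 = g3 := rfl
    have l0 (k : Fin 3) : pd k (fun y : Fin 3 → ℝ => ![σ₀, μ₀ * Real.cos (y 0), 0] 0) x = 0 :=
      pk σ₀ k
    have l1 (k : Fin 3) : pd k (fun y : Fin 3 → ℝ => ![σ₀, μ₀ * Real.cos (y 0), 0] 1) x =
        -(μ₀ * Real.sin (x 0) * (Pi.single k 1 : Fin 3 → ℝ) 0) := pμc k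
    have l2 (k : Fin 3) : pd k (fun y : Fin 3 → ℝ => ![σ₀, μ₀ * Real.cos (y 0), 0] 2) x = 0 :=
      pk 0 k
    have m0 : (![σ₀, μ₀ * Real.cos (x 0), 0] : Fin 3 → ℝ) 0 = σ₀ := rfl
    have m1 : (![σ₀, μ₀ * Real.cos (x 0), 0] : Fin 3 → ℝ) 1 = μ₀ * Real.cos (x 0) := rfl
    have m2 : (![σ₀, μ₀ * Real.cos (x 0), 0] : Fin 3 → ℝ) 2 = 0 := rfl
    have q11 : pd 0 (fun y => gPend a y 0 0) x = 0 := pk 1 0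
    have q12 : pd 0 (fun y => gPend a y 0 1) x = _ := pac 0
    have q13 : pd 0 (fun y => gPend a y 0 2) x = _ := pas 0
    have q21 : pd 0 (fun y => gPend a y 1 0) x = _ := pac 0
    have q31 : pd 0 (fun y => gPend a y 2 0) x = _ := pas 0
    have q22 : pd 0 (fun y => gPend a y 1 1) x = 0 := pk 1 0
    have q23 : pd 0 (fun y => gPend a y 1 2) x = 0 := pk 0 0
    have q32 : pd 0 (fun y => gPend a y 2 1) x = 0 := pk 0 0
    have q33 : pd 0 (fun y => gPend a y 2 2) x = 0 := pk 1 0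
    have s0 : (Pi.single (0 : Fin 3) 1 : Fin 3 → ℝ) 0 = 1 := by simp
    have s1 : (Pi.single (1 : Fin 3) 1 : Fin 3 → ℝ) 0 = 0 := by simp
    have s2 : (Pi.single (2 : Fin 3) 1 : Fin 3 → ℝ) 0 = 0 := by simp
    change ∑ l, ![σ₀, μ₀ * Real.cos (x 0), 0] l * pd l (fun y => gh y i j) x
        + ∑ l, pd i (fun y => ![σ₀, μ₀ * Real.cos (y 0), 0] l) x * gh x l j
        + ∑ l, pd j (fun y => ![σ₀, μ₀ * Real.cos (y 0), 0] l) x * gh x l i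
        = pd 0 (fun y => gPend a y i j) x
    clear_value gh g2 g3 g4
    simp only [Fin.sum_univ_three, l0, l1, l2, m0, m1, m2]
    have hi : i = 0 ∨ i = 1 ∨ i = 2 := by fin_cases i <;> simp
    have hj : j = 0 ∨ j = 1 ∨ j = 2 := by fin_cases j <;> simp
    rcases hi with rfl | rfl | rfl <;> rcases hj with rfl | rfl | rfl <;>
      simp only [p11, p12, p13, p21, p22, p23, p31, p32, p33, v11, v12, v13, v21, v22, v23,
        v31, v32, q11, q12, q13, q21, q22, q23, q31, q32, q33, s0, s1, s2]
    · field_simp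
      linear_combination (μ₀ ^ 2 * Real.cos (x 0) ^ 2) * e2
    · linear_combination (norm := skip) (-μ₀ * Real.cos (x 0) / σ₀) * e2
      field_simp
      ring
    · linear_combination (norm := skip) (-μ₀ * Real.cos (x 0) / σ₀) * e3
      field_simp
      ring
    · linear_combination (norm := skip) (-μ₀ * Real.cos (x 0) / σ₀) * e2
      field_simp
      ring
    · linear_combination e2
    · linear_combination e3
    · linear_combination (norm := skip) (-μ₀ * Real.cos (x 0) / σ₀) * e3
      field_simp
      ring
    · linear_combination e3
    · linear_combination e4
  · intro x i
    fin_cases i <;> simp [Fin.sum_univ_three, ghatPend, gPend] <;> field_simp <;> ring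
end

section
/- Consider the inverted pendulum cart on a constantly inclined roller coaster: configuration variables (x¹,x²) = (φ,s), constant inclination α₀ with sin α₀ ≠ 0, smooth curvature function k : ℝ → ℝ, mass matrix g₁₁ = 1, g₁₂ = g₂₁ = b sin(α₀ − φ), g₂₂ = 1 + k(s)² sin²(φ)/sin²(α₀), with 0 < b < 1. Define β(s) = ∫₀ˢ k(p)²/(b sin²α₀) dp and z²(φ,s) = β(s) + cos(α₀) ln|csc φ + cot φ| − sin(α₀) ln|sec φ + tan φ|. Then for every smooth function ν : ℝ → ℝ, the pair λ¹(φ,s) = ν(z²) − (sin(α₀ − φ)/sin(2φ)) ν′(z²), λ²(φ,s) = ν′(z²)/(b sin(2φ)) satisfies the λ-equations ∂(g_{1i}λ^i)/∂x^k − 2[k1,i]λ^i = 0 (k = 1,2) on the region {(φ,s) : 0 < φ < π/2}. -/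
/-- Mass matrix of the inverted pendulum cart on a constantly inclined roller
coaster; coordinates `(x¹, x²) = (φ, s)`. -/
noncomputable def gIncline (b α₀ : ℝ) (k : ℝ → ℝ) (x : Fin 2 → ℝ) :
    Matrix (Fin 2) (Fin 2) ℝ :=
  !![1, b * Real.sin (α₀ - x 0);
     b * Real.sin (α₀ - x 0), 1 + (k (x 1))^2 * (Real.sin (x 0))^2 / (Real.sin α₀)^2]

/-- `β(s) = ∫₀ˢ k(p)²/(b sin²α₀) dp`. -/
noncomputable def betaIncline (b α₀ : ℝ) (k : ℝ → ℝ) (s : ℝ) : ℝ :=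
  ∫ p in (0 : ℝ)..s, (k p)^2 / (b * (Real.sin α₀)^2)

/-- The characteristic coordinate
`z² = β(s) + cos α₀ ln|csc φ + cot φ| − sin α₀ ln|sec φ + tan φ|`. -/
noncomputable def z2Incline (b α₀ : ℝ) (k : ℝ → ℝ) (φ s : ℝ) : ℝ :=
  betaIncline b α₀ k s
    + Real.cos α₀ * Real.log |1 / Real.sin φ + Real.cos φ / Real.sin φ|
    - Real.sin α₀ * Real.log |1 / Real.cos φ + Real.tan φ|

lemma pd_of {n : ℕ} {f : (Fin n → ℝ) → ℝ} {L : (Fin n → ℝ) →L[ℝ] ℝ} {x : Fin n → ℝ}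
    (h : HasFDerivAt f L x) (k : Fin n) : pd k f x = L (Pi.single k 1) := by
  rw [pd, h.fderiv]

lemma logs_deriv (α₀ φ : ℝ) (h0 : 0 < φ) (h1 : φ < Real.pi / 2) :
    HasDerivAt (fun φ => Real.cos α₀ * Real.log |1 / Real.sin φ + Real.cos φ / Real.sin φ|
      - Real.sin α₀ * Real.log |1 / Real.cos φ + Real.tan φ|)
      (-2 * Real.cos (α₀ - φ) / Real.sin (2 * φ)) φ := by
  have hs : 0 < Real.sin φ := Real.sin_pos_of_pos_of_lt_pi h0 (by linarith [Real.pi_pos])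
  have hc : 0 < Real.cos φ := Real.cos_pos_of_mem_Ioo ⟨by linarith, h1⟩
  have hq := Real.sin_sq_add_cos_sq φ
  simp only [Real.log_abs, Real.tan_eq_sin_div_cos, ← add_div]
  have e1 : (1 + Real.cos φ) / Real.sin φ ≠ 0 := by positivity
  have e2 : (1 + Real.sin φ) / Real.cos φ ≠ 0 := by positivity
  have d1 := ((((Real.hasDerivAt_cos φ).const_add 1).div (Real.hasDerivAt_sin φ) hs.ne').log e1).const_mul
    (Real.cos α₀)
  have d2 := ((((Real.hasDerivAt_sin φ).const_add 1).div (Real.hasDerivAt_cos φ) hc.ne').log e2).const_mul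
    (Real.sin α₀)
  refine (d1.sub d2).congr_deriv ?_
  have p1 : (1 + Real.cos φ) ≠ 0 := by positivity
  have p2 : (1 + Real.sin φ) ≠ 0 := by positivity
  have t1 : (-Real.sin φ * Real.sin φ - (1 + Real.cos φ) * Real.cos φ) = -(1 + Real.cos φ) := by
    linear_combination -hq
  have t2 : (Real.cos φ * Real.cos φ - (1 + Real.sin φ) * -Real.sin φ) = (1 + Real.sin φ) := by
    linear_combination hq
  simp only [Pi.div_apply]
  rw [t1, t2, Real.sin_two_mul, Real.cos_sub]
  field_simp
  try ring

lemma beta_deriv (b α₀ : ℝ) (k : ℝ → ℝ) (hk : Continuous k) (s : ℝ) :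
    HasDerivAt (betaIncline b α₀ k) ((k s)^2 / (b * (Real.sin α₀)^2)) s := by
  have hc : Continuous fun p => (k p)^2 / (b * (Real.sin α₀)^2) := by fun_prop
  exact intervalIntegral.integral_hasDerivAt_right (hc.intervalIntegrable _ _)
    (hc.stronglyMeasurableAtFilter _ _) hc.continuousAt

/-- **Case 2 (constant inclination).**  For every smooth `ν`, the pair
`λ¹ = ν(z²) − (sin(α₀−φ)/sin 2φ) ν′(z²)`, `λ² = ν′(z²)/(b sin 2φ)` solves the
λ-equations on the region `0 < φ < π/2`. -/
theorem inclined_coaster_lambda_solution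
    (b α₀ : ℝ) (hb0 : 0 < b) (hb1 : b < 1) (hα₀ : Real.sin α₀ ≠ 0)
    (k : ℝ → ℝ) (hk : ContDiff ℝ (⊤ : ℕ∞) k)
    (ν : ℝ → ℝ) (hν : ContDiff ℝ (⊤ : ℕ∞) ν) :
    ∀ x : Fin 2 → ℝ, 0 < x 0 → x 0 < Real.pi / 2 → ∀ k' : Fin 2,
      pd k' (fun y => ∑ i, gIncline b α₀ k y 0 i *
          ![ν (z2Incline b α₀ k (y 0) (y 1))
              - (Real.sin (α₀ - y 0) / Real.sin (2 * y 0)) *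
                deriv ν (z2Incline b α₀ k (y 0) (y 1)),
            deriv ν (z2Incline b α₀ k (y 0) (y 1)) / (b * Real.sin (2 * y 0))] i) x
        - 2 * ∑ i, chr (gIncline b α₀ k) k' 0 i x *
            ![ν (z2Incline b α₀ k (x 0) (x 1))
                - (Real.sin (α₀ - x 0) / Real.sin (2 * x 0)) *
                  deriv ν (z2Incline b α₀ k (x 0) (x 1)),
              deriv ν (z2Incline b α₀ k (x 0) (x 1)) / (b * Real.sin (2 * x 0))] i
        = 0 := by
  intro x h0 h1 k'
  have hs : 0 < Real.sin (x 0) := Real.sin_pos_of_pos_of_lt_pi h0 (by linarith [Real.pi_pos])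
  have hc : 0 < Real.cos (x 0) := Real.cos_pos_of_mem_Ioo ⟨by linarith, h1⟩
  have hb : b ≠ 0 := hb0.ne'
  have hP0 : HasFDerivAt (fun y : Fin 2 → ℝ => y 0)
      (ContinuousLinearMap.proj (R := ℝ) (φ := fun _ : Fin 2 => ℝ) 0) x := hasFDerivAt_apply 0 x
  have hP1 : HasFDerivAt (fun y : Fin 2 → ℝ => y 1)
      (ContinuousLinearMap.proj (R := ℝ) (φ := fun _ : Fin 2 => ℝ) 1) x := hasFDerivAt_apply 1 x
  have hz : HasFDerivAt (fun y : Fin 2 → ℝ => z2Incline b α₀ k (y 0) (y 1)) _ x :=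
    (((beta_deriv b α₀ k hk.continuous (x 1)).comp_hasFDerivAt x hP1).add
      ((logs_deriv α₀ (x 0) h0 h1).comp_hasFDerivAt x hP0)).congr_of_eventuallyEq
      (Filter.Eventually.of_forall fun y => by
        simp only [z2Incline, Function.comp, Pi.add_apply]; ring)
  have hνd : HasDerivAt ν (deriv ν (z2Incline b α₀ k (x 0) (x 1))) (z2Incline b α₀ k (x 0) (x 1)) :=
    ((hν.differentiable (by simp)) _).hasDerivAt
  have hF := hνd.comp_hasFDerivAt x hz
  have hsum : (fun y : Fin 2 → ℝ => ∑ i, gIncline b α₀ k y 0 i *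
          ![ν (z2Incline b α₀ k (y 0) (y 1))
              - (Real.sin (α₀ - y 0) / Real.sin (2 * y 0)) *
                deriv ν (z2Incline b α₀ k (y 0) (y 1)),
            deriv ν (z2Incline b α₀ k (y 0) (y 1)) / (b * Real.sin (2 * y 0))] i)
      = ν ∘ fun y : Fin 2 → ℝ => z2Incline b α₀ k (y 0) (y 1) := by
    funext y
    simp only [Fin.sum_univ_two, gIncline, Matrix.of_apply, Matrix.cons_val_zero,
      Matrix.cons_val_one, Function.comp]
    rw [mul_comm b (Real.sin (2 * y 0)), ← div_div]
    field_simp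
    ring
  have g00 : HasFDerivAt (fun y => gIncline b α₀ k y 0 0) (0 : (Fin 2 → ℝ) →L[ℝ] ℝ) x := by
    simpa [gIncline] using hasFDerivAt_const (1 : ℝ) x
  have hS : HasDerivAt (fun t => b * Real.sin (α₀ - t)) (-(b * Real.cos (α₀ - x 0))) (x 0) := by
    have := ((Real.hasDerivAt_sin (α₀ - x 0)).comp (x 0)
      ((hasDerivAt_id (x 0)).const_sub α₀)).const_mul b
    exact this.congr_deriv (by ring)
  have hg := hS.comp_hasFDerivAt x hP0
  have g01 : HasFDerivAt (fun y => gIncline b α₀ k y 0 1) _ x := hg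
  have g10 : HasFDerivAt (fun y => gIncline b α₀ k y 1 0) _ x := hg
  have hK0 := (((hk.differentiable (by simp)) (x 1)).hasDerivAt.pow 2).comp_hasFDerivAt x hP1
  have hK : HasFDerivAt (fun y : Fin 2 → ℝ => (k (y 1))^2) _ x := hK0
  have hQ0 := (((Real.hasDerivAt_sin (x 0)).pow 2).div_const
    ((Real.sin α₀)^2)).comp_hasFDerivAt x hP0
  have hQ : HasFDerivAt (fun y : Fin 2 → ℝ => (Real.sin (y 0))^2 / (Real.sin α₀)^2) _ x := hQ0
  have g11 : HasFDerivAt (fun y => gIncline b α₀ k y 1 1) _ x :=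
    ((hK.mul hQ).const_add 1).congr_of_eventuallyEq
      (Filter.Eventually.of_forall fun y => by simp [gIncline, mul_div_assoc])
  rw [hsum, pd_of hF]
  have hs2 := Real.sin_two_mul (x 0)
  fin_cases k'
  · simp only [Fin.sum_univ_two, chr, Fin.zero_eta, Fin.mk_one, pd_of g00, pd_of g01, pd_of g10, pd_of g11]
    simp [hs2]
    field_simp
    try ring
  · simp only [Fin.sum_univ_two, chr, Fin.zero_eta, Fin.mk_one, pd_of g00, pd_of g01, pd_of g10, pd_of g11]
    simp [hs2]
    field_simp
    try ring
end

section
/- Consider the double pendulum on a wheel: mass matrix on ℝ³ with entries g_{ij}(x) = m_{ij} cos(x^i − x^j) for i,j ∈ {1,2,3}, where the parameters m_{ij} = m_{ji} are positive and g(x) is invertible for every x ∈ ℝ³; the unactuated degrees of freedom are a = 1,2 (so m = 2). If λ : ℝ³ → ℝ^{2×3} is a smooth solution of the λ-equations ∂(g_{ai}λ_b^i)/∂x^k − [ka,i]λ_b^i − [kb,i]λ_a^i = 0 (all k = 1,2,3 and a,b = 1,2), then λ_1^3 ≡ 0 and λ_2^3 ≡ 0 on ℝ³. -/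
/-- Mass matrix of the double pendulum on a wheel: `g_{ij} = m_{ij} cos(xⁱ − xʲ)`. -/
noncomputable def gDP (m : Matrix (Fin 3) (Fin 3) ℝ) (x : Fin 3 → ℝ) :
    Matrix (Fin 3) (Fin 3) ℝ :=
  Matrix.of fun i j => m i j * Real.cos (x i - x j)

theorem pd_gDP (m : Matrix (Fin 3) (Fin 3) ℝ) (k i j : Fin 3) (x : Fin 3 → ℝ) :
    pd k (fun y => gDP m y i j) x =
      -(m i j * Real.sin (x i - x j)) *
        ((if i = k then 1 else 0) - (if j = k then 1 else 0)) := by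
  have h1 : ∀ i : Fin 3, HasFDerivAt (fun y : Fin 3 → ℝ => y i)
      (ContinuousLinearMap.proj (R := ℝ) (φ := fun _ : Fin 3 => ℝ) i) x := fun i =>
    (ContinuousLinearMap.proj (R := ℝ) (φ := fun _ : Fin 3 => ℝ) i).hasFDerivAt
  have h2 := (((h1 i).sub (h1 j)).cos).const_mul (m i j)
  have h3 : (fun y => gDP m y i j) = fun y : Fin 3 → ℝ => m i j * Real.cos (y i - y j) := rfl
  unfold pd
  rw [h3]
  have h4 := h2.fderiv
  simp only [Pi.sub_apply] at h4
  rw [h4]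
  simp [Pi.single_apply]
  ring

theorem const_along (L : (Fin 3 → ℝ) → ℝ) (hL : Differentiable ℝ L)
    (h : ∀ x, pd 2 L x = 0) (x : Fin 3 → ℝ) (t : ℝ) :
    L (x + t • Pi.single 2 1) = L x := by
  have hd : ∀ s : ℝ, HasDerivAt (fun s : ℝ => L (x + s • Pi.single 2 1)) 0 s := by
    intro s
    have h1 : HasDerivAt (fun s : ℝ => x + s • (Pi.single 2 1 : Fin 3 → ℝ))
        (Pi.single 2 1) s := by
      simpa using ((hasDerivAt_id s).smul_const (Pi.single 2 1 : Fin 3 → ℝ)).const_add x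
    have h2 := (hL (x + s • Pi.single 2 1)).hasFDerivAt.comp_hasDerivAt s h1
    have h3 := h (x + s • Pi.single 2 1)
    unfold pd at h3
    rw [h3] at h2
    exact h2
  have := is_const_of_deriv_eq_zero (fun s => (hd s).differentiableAt)
    (fun s => (hd s).deriv) t 0
  simpa using this

theorem pd_along (L : (Fin 3 → ℝ) → ℝ) (hL : Differentiable ℝ L)
    (h : ∀ x, pd 2 L x = 0) (k : Fin 3) (x : Fin 3 → ℝ) (t : ℝ) :
    pd k L (x + t • Pi.single 2 1) = pd k L x := by
  unfold pd
  rw [← fderiv_comp_add_right]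
  simp only [const_along L hL h]

theorem sin_mul_zero (f : ℝ → ℝ) (hf : Continuous f) (c : ℝ)
    (h : ∀ t, Real.sin (c - t) * f t = 0) (t : ℝ) : f t = 0 := by
  by_contra hne
  have h1 : ∀ᶠ s in nhds t, f s ≠ 0 := hf.continuousAt.eventually_ne hne
  have h2 : (fun s => Real.sin (c - s)) =ᶠ[nhds t] fun _ => 0 := by
    filter_upwards [h1] with s hs
    exact (mul_eq_zero.1 (h s)).resolve_right hs
  have h3 : HasDerivAt (fun s => Real.sin (c - s)) (Real.cos (c - t) * (-1)) t :=
    ((hasDerivAt_id t).const_sub c).sin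
  have h4 := h2.deriv_eq
  rw [h3.deriv] at h4
  have h5 := h2.eq_of_nhds
  have h6 := Real.sin_sq_add_cos_sq (c - t)
  simp at h4 h5
  rw [h4, h5] at h6
  norm_num at h6

/-- Key step. -/
theorem key (m11 m12 m13 m22 m23 : ℝ) (hdet : m11 * m23 - m12 * m13 ≠ 0 ∨
      m12 * m23 - m22 * m13 ≠ 0)
    (u : (Fin 3 → ℝ) → Fin 3 → ℝ) (hu : Continuous fun x => u x 2)
    (hP : ∀ (x : Fin 3 → ℝ) (t : ℝ), ∀ y, y = x + t • Pi.single 2 1 →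
      m11 * u y 0 + m12 * Real.cos (y 0 - y 1) * u y 1 + m13 * Real.cos (y 0 - y 2) * u y 2
      = m11 * u x 0 + m12 * Real.cos (x 0 - x 1) * u x 1 + m13 * Real.cos (x 0 - x 2) * u x 2)
    (hQ : ∀ (x : Fin 3 → ℝ) (t : ℝ), ∀ y, y = x + t • Pi.single 2 1 →
      m12 * Real.cos (y 0 - y 1) * u y 0 + m22 * u y 1 + m23 * Real.cos (y 1 - y 2) * u y 2
      = m12 * Real.cos (x 0 - x 1) * u x 0 + m22 * u x 1 + m23 * Real.cos (x 1 - x 2) * u x 2)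
    (hR : ∀ (x : Fin 3 → ℝ) (t : ℝ), ∀ y, y = x + t • Pi.single 2 1 →
      m12 * Real.sin (y 0 - y 1) * u y 1 + m13 * Real.sin (y 0 - y 2) * u y 2
      = m12 * Real.sin (x 0 - x 1) * u x 1 + m13 * Real.sin (x 0 - x 2) * u x 2)
    (hS : ∀ (x : Fin 3 → ℝ) (t : ℝ), ∀ y, y = x + t • Pi.single 2 1 →
      -m12 * Real.sin (y 0 - y 1) * u y 0 + m23 * Real.sin (y 1 - y 2) * u y 2
      = -m12 * Real.sin (x 0 - x 1) * u x 0 + m23 * Real.sin (x 1 - x 2) * u x 2)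
    (x : Fin 3 → ℝ) : u x 2 = 0 := by
  have hcont : Continuous fun t : ℝ => u (x + t • Pi.single 2 1) 2 :=
    hu.comp (by fun_prop)
  have main : ∀ c : Fin 3, c ≠ 2 → (∀ (x : Fin 3 → ℝ) (t : ℝ), ∀ y,
      y = x + t • Pi.single 2 1 →
      Real.sin (y c - y 2) * u y 2 = Real.sin (x c - x 2) * u x 2) → u x 2 = 0 := by
    intro c hc h
    have := sin_mul_zero _ hcont (x c - x 2) (by
      intro t
      have h1 := h x t _ rfl
      have h2 := h x (x c - x 2) _ rfl
      simp [Pi.single_apply, hc] at h1 h2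
      rw [show x c - x 2 - t = x c - (x 2 + t) by ring, h1, mul_eq_zero.2 h2]) 0
    simpa using this
  have e1 : ∀ y : Fin 3 → ℝ, Real.sin (y 1 - y 2) =
      Real.cos (y 0 - y 1) * Real.sin (y 0 - y 2) - Real.sin (y 0 - y 1) * Real.cos (y 0 - y 2) := by
    intro y
    rw [show y 1 - y 2 = (y 0 - y 2) - (y 0 - y 1) by ring, Real.sin_sub]; ring
  have e2 : ∀ y : Fin 3 → ℝ, Real.sin (y 0 - y 2) =
      Real.sin (y 0 - y 1) * Real.cos (y 1 - y 2) + Real.cos (y 0 - y 1) * Real.sin (y 1 - y 2) := by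
    intro y
    rw [show y 0 - y 2 = (y 0 - y 1) + (y 1 - y 2) by ring, Real.sin_add]
  rcases hdet with hd | hd
  · refine main 1 (by decide) fun x t y hy => mul_left_cancel₀ hd ?_
    have p := hP x t y hy
    have r := hR x t y hy
    have s := hS x t y hy
    have a0 : y 0 - y 1 = x 0 - x 1 := by simp [hy]
    have f1 := e1 y
    have f2 := e1 x
    rw [a0] at p r s f1
    linear_combination m12 * Real.sin (x 0 - x 1) * p - m12 * Real.cos (x 0 - x 1) * r + m11 * s
      - m12 * m13 * u y 2 * f1 + m12 * m13 * u x 2 * f2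
  · refine main 0 (by decide) fun x t y hy => mul_left_cancel₀ hd ?_
    have q := hQ x t y hy
    have r := hR x t y hy
    have s := hS x t y hy
    have a0 : y 0 - y 1 = x 0 - x 1 := by simp [hy]
    have f1 := e2 y
    have f2 := e2 x
    rw [a0] at q r s f1
    linear_combination m12 * Real.sin (x 0 - x 1) * q - m22 * r + m12 * Real.cos (x 0 - x 1) * s
      + m12 * m23 * u y 2 * f1 - m12 * m23 * u x 2 * f2

/-- For the double pendulum on a wheel (two unactuated degrees of freedom),
any smooth solution of the λ-equations has `λ₁³ ≡ 0` and `λ₂³ ≡ 0`. -/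
theorem double_pendulum_lambda_third_components_vanish
    (m : Matrix (Fin 3) (Fin 3) ℝ) (hmsym : m.IsSymm) (hmpos : ∀ i j, 0 < m i j)
    (hginv : ∀ x : Fin 3 → ℝ, IsUnit (gDP m x).det)
    (lam : (Fin 3 → ℝ) → Fin 2 → Fin 3 → ℝ)
    (hlam : ∀ a i, ContDiff ℝ (⊤ : ℕ∞) (fun x => lam x a i))
    (hlamEq : ∀ (x : Fin 3 → ℝ) (k : Fin 3) (a b : Fin 2),
      pd k (fun y => ∑ i, gDP m y (Fin.castSucc a) i * lam y b i) x
        - ∑ i, chr (gDP m) k (Fin.castSucc a) i x * lam x b i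
        - ∑ i, chr (gDP m) k (Fin.castSucc b) i x * lam x a i = 0) :
    ∀ (x : Fin 3 → ℝ) (a : Fin 2), lam x a 2 = 0 := by
  have m10 : m 1 0 = m 0 1 := hmsym.apply 0 1
  have m20 : m 2 0 = m 0 2 := hmsym.apply 0 2
  have m21 : m 2 1 = m 1 2 := hmsym.apply 1 2
  have hdet : m 0 0 * m 1 2 - m 0 1 * m 0 2 ≠ 0 ∨ m 0 1 * m 1 2 - m 1 1 * m 0 2 ≠ 0 := by
    by_contra! hc
    obtain ⟨h1, h2⟩ := hc
    have h0 := (hginv 0).ne_zero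
    apply h0
    have h3 : m 0 0 * m 1 1 - m 0 1 * m 0 1 = 0 := by
      have : m 1 2 * (m 0 0 * m 1 1 - m 0 1 * m 0 1) = 0 := by
        linear_combination m 1 1 * h1 - m 0 1 * h2
      exact (mul_eq_zero.1 this).resolve_left (hmpos 1 2).ne'
    rw [Matrix.det_fin_three]
    simp [gDP, m10, m20, m21]
    linear_combination m 2 2 * h3 - m 1 2 * h1 + m 0 2 * h2
  have hl : ∀ a i, Differentiable ℝ fun x => lam x a i := fun a i =>
    (hlam a i).differentiable (by simp)
  have hLd : ∀ a b : Fin 2, Differentiable ℝ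
      fun y => ∑ i, gDP m y (Fin.castSucc a) i * lam y b i := by
    intro a b
    simp only [gDP, Matrix.of_apply]
    fun_prop
  have hL2 : ∀ (a b : Fin 2) x,
      pd 2 (fun y => ∑ i, gDP m y (Fin.castSucc a) i * lam y b i) x = 0 := by
    intro a b x
    have h := hlamEq x 2 a b
    have hs : ∀ i j, Real.sin (x i - x j) = - Real.sin (x j - x i) := by
      intro i j
      rw [← Real.sin_neg]; ring_nf
    fin_cases a <;> fin_cases b <;>
      simpa [Fin.sum_univ_three, chr, pd_gDP, m10, m20, m21, hs 2 0, hs 2 1] using h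
  have hC := fun a b => const_along _ (hLd a b) (hL2 a b)
  have hD := fun a b => pd_along _ (hLd a b) (hL2 a b)
  have hRR : ∀ (b : Fin 2) x, pd 0 (fun y => ∑ i, gDP m y (Fin.castSucc 0) i * lam y b i) x =
      -(if b = 0 then 2 else 1) * (m 0 1 * Real.sin (x 0 - x 1) * lam x b 1
        + m 0 2 * Real.sin (x 0 - x 2) * lam x b 2) := by
    intro b x
    have h := hlamEq x 0 0 b
    have hs : ∀ i j, Real.sin (x i - x j) = - Real.sin (x j - x i) := by
      intro i j
      rw [← Real.sin_neg]; ring_nf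
    fin_cases b <;>
      simp [Fin.sum_univ_three, chr, pd_gDP, m10, m20, m21, hs 1 0] at h ⊢ <;> linear_combination h
  have hSS : ∀ (b : Fin 2) x, pd 1 (fun y => ∑ i, gDP m y (Fin.castSucc 1) i * lam y b i) x =
      -(if b = 1 then 2 else 1) * (-m 0 1 * Real.sin (x 0 - x 1) * lam x b 0
        + m 1 2 * Real.sin (x 1 - x 2) * lam x b 2) := by
    intro b x
    have h := hlamEq x 1 1 b
    have hs : Real.sin (x 1 - x 0) = - Real.sin (x 0 - x 1) := by
      rw [← Real.sin_neg]; ring_nf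
    fin_cases b <;>
      simp [Fin.sum_univ_three, chr, pd_gDP, m10, m20, m21, hs] at h ⊢ <;> linear_combination h
  intro x b
  refine key (m 0 0) (m 0 1) (m 0 2) (m 1 1) (m 1 2) hdet (fun x => lam x b)
    (hlam b 2).continuous ?_ ?_ ?_ ?_ x
  · rintro x t y rfl
    have h := hC 0 b x t
    simpa [Fin.sum_univ_three, gDP] using h
  · rintro x t y rfl
    have h := hC 1 b x t
    have hc : Real.cos (x 1 - x 0) = Real.cos (x 0 - x 1) := by
      rw [← Real.cos_neg]; ring_nf
    simpa [Fin.sum_univ_three, gDP, m10, hc] using h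
  · rintro x t y rfl
    have h := hD 0 b 0 x t
    rw [hRR, hRR] at h
    exact mul_left_cancel₀ (by split_ifs <;> norm_num) h
  · rintro x t y rfl
    have h := hD 1 b 1 x t
    rw [hSS, hSS] at h
    exact mul_left_cancel₀ (by split_ifs <;> norm_num) h
end

section
/- Consider the double pendulum on a wheel: mass matrix on ℝ³ with entries g_{ij}(x) = m_{ij} cos(x^i − x^j) for i,j ∈ {1,2,3}, where the parameters m_{ij} = m_{ji} are positive and g(x) is invertible for every x ∈ ℝ³; the unactuated degrees of freedom are a = 1,2 (so m = 2). Then every smooth solution λ : ℝ³ → ℝ^{2×3} of the λ-equations ∂(g_{ai}λ_b^i)/∂x^k − [ka,i]λ_b^i − [kb,i]λ_a^i = 0 (all k = 1,2,3 and a,b = 1,2) is basic: there exists a constant κ ∈ ℝ such that λ_a^i(x) = κ δ_a^i for all x ∈ ℝ³, all a = 1,2, and all i = 1,2,3. Equivalently, the functions ν_{ab} := g_{ai}λ_b^i satisfy ν₁₁ ≡ κ m₁₁, ν₂₂ ≡ (m₂₂/m₁₁) ν₁₁, and ν₁₂ = (m₁₂/m₁₁) cos(x² − x¹) ν₁₁.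 -/
/-- `ν_{ab} = g_{ai} λ_b^i` for the double pendulum on a wheel. -/
noncomputable def nuDP (m : Matrix (Fin 3) (Fin 3) ℝ)
    (lam : (Fin 3 → ℝ) → Fin 2 → Fin 3 → ℝ) (a b : Fin 2) (x : Fin 3 → ℝ) : ℝ :=
  ∑ i, gDP m x (Fin.castSucc a) i * lam x b i

theorem pd_shift_const {f : (Fin 3 → ℝ) → ℝ} (hf : Differentiable ℝ f) (k : Fin 3)
    (h : ∀ x, pd k f x = 0) (x : Fin 3 → ℝ) (t : ℝ) : f (x + t • Pi.single k 1) = f x := by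
  have hd : ∀ s : ℝ, HasDerivAt (fun s : ℝ => f (x + s • Pi.single k (1:ℝ))) 0 s := by
    intro s
    have h1 : HasDerivAt (fun s : ℝ => x + s • (Pi.single k (1:ℝ) : Fin 3 → ℝ))
        (Pi.single k (1:ℝ)) s := by
      have := ((hasDerivAt_id s).smul_const (Pi.single k (1:ℝ) : Fin 3 → ℝ)).const_add x
      simpa using this
    have h2 := (hf (x + s • Pi.single k (1:ℝ))).hasFDerivAt.comp_hasDerivAt s h1
    have h3 := h (x + s • Pi.single k (1:ℝ))
    unfold pd at h3
    rw [h3] at h2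
    exact h2
  have := is_const_of_deriv_eq_zero (fun s => (hd s).differentiableAt) (fun s => (hd s).deriv) t 0
  simpa using this

theorem pd_of_shift {f : (Fin 3 → ℝ) → ℝ} (v : Fin 3 → ℝ) (h : ∀ x, f (x + v) = f x)
    (j : Fin 3) (x : Fin 3 → ℝ) : pd j f (x + v) = pd j f x := by
  unfold pd
  rw [← fderiv_comp_add_right v]
  simp only [h]

theorem zero_of_sin_mul {f : (Fin 3 → ℝ) → ℝ} (hf : Continuous f) {i j : Fin 3} (hij : i ≠ j)
    (h : ∀ x, Real.sin (x i - x j) * f x = 0) (x : Fin 3 → ℝ) : f x = 0 := by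
  by_contra hne
  have hc : Continuous (fun s : ℝ => f (x + s • Pi.single i (1:ℝ))) := by fun_prop
  have hev : ∀ᶠ s in nhds (0:ℝ), f (x + s • Pi.single i (1:ℝ)) ≠ 0 := by
    apply hc.continuousAt.eventually_ne
    simpa using hne
  obtain ⟨ε, hε, hb⟩ := Metric.eventually_nhds_iff.1 hev
  have hs : ∀ s : ℝ, |s| < ε → Real.sin (x i - x j + s) = 0 := by
    intro s hs
    have h1 := h (x + s • Pi.single i (1:ℝ))
    have h2 := hb (y := s) (by simpa [Real.dist_eq] using hs)
    have h3 := (mul_eq_zero.1 h1).resolve_right h2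
    rw [← h3]
    congr 1
    simp [hij.symm]
    ring
  have h0 := hs 0 (by simpa using hε)
  rw [add_zero] at h0
  set s := min (ε/2) 1 with hsd
  have hsp : 0 < s := by positivity
  have hs1 : s ≤ 1 := min_le_right _ _
  have hs2 : s ≤ ε/2 := min_le_left _ _
  have h1 := hs s (by rw [abs_of_pos hsp]; linarith)
  rw [Real.sin_add, h0] at h1
  have h4 : 0 < Real.sin s := Real.sin_pos_of_pos_of_lt_pi hsp (by linarith [Real.pi_gt_three])
  have h5 := Real.sin_sq_add_cos_sq (x i - x j)
  rw [h0] at h5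
  have h6 : Real.cos (x i - x j) = 0 := by
    rcases mul_eq_zero.1 (by linarith : Real.cos (x i - x j) * Real.sin s = 0) with h | h
    · exact h
    · exact absurd h h4.ne'
  rw [h6] at h5
  norm_num at h5

theorem pd_cos (c : ℝ) (i j k : Fin 3) (x : Fin 3 → ℝ) :
    pd k (fun y => c * Real.cos (y i - y j)) x =
      -(c * Real.sin (x i - x j)) * ((if i = k then 1 else 0) - (if j = k then 1 else 0)) := by
  unfold pd
  have h1 : HasFDerivAt (fun y : Fin 3 → ℝ => y i - y j)
      (ContinuousLinearMap.proj (R := ℝ) (φ := fun _ : Fin 3 => ℝ) i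
        - ContinuousLinearMap.proj (R := ℝ) (φ := fun _ : Fin 3 => ℝ) j) x :=
    (hasFDerivAt_apply i x).sub (hasFDerivAt_apply j x)
  have h2 := (h1.cos).const_mul c
  rw [h2.fderiv]
  simp [Pi.single_apply]
  ring

theorem chr_gDP (m : Matrix (Fin 3) (Fin 3) ℝ) (hmsym : m.IsSymm) (i j k : Fin 3)
    (x : Fin 3 → ℝ) :
    chr (gDP m) i j k x = if i = j then m j k * Real.sin (x k - x j) else 0 := by
  have hs : ∀ a b, m a b = m b a := fun a b => hmsym.apply b a
  have hn : ∀ a b, Real.sin (x a - x b) = - Real.sin (x b - x a) := by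
    intro a b
    rw [← Real.sin_neg]; ring_nf
  unfold chr
  simp only [gDP, Matrix.of_apply, pd_cos]
  rw [hn j k, hn i k]
  by_cases h1 : i = j
  · subst h1
    by_cases h2 : i = k
    · subst h2; simp
    · simp [h2, Ne.symm h2]; ring
  · by_cases h2 : i = k
    · subst h2
      simp [h1, Ne.symm h1, hs j i]
    · by_cases h3 : j = k
      · subst h3; simp [h1, Ne.symm h1, hn i j]
      · simp [h1, Ne.symm h1, h2, h3, Ne.symm h2, Ne.symm h3]

theorem third_zero (m : Matrix (Fin 3) (Fin 3) ℝ) (hmpos : ∀ i j, 0 < m i j)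
    (hdet : m 0 0 * m 1 1 - m 0 1 * m 1 0 ≠ 0)
    (u : (Fin 3 → ℝ) → Fin 3 → ℝ) (hu : Continuous fun x => u x 2)
    (hC : ∀ (a : Fin 2) (x : Fin 3 → ℝ) (t : ℝ),
      ∑ i, m a.castSucc i * Real.cos ((x + t • Pi.single 2 1 : Fin 3 → ℝ) i - (x + t • Pi.single 2 1 : Fin 3 → ℝ) a.castSucc)
        * u (x + t • Pi.single 2 1) i
      = ∑ i, m a.castSucc i * Real.cos (x i - x a.castSucc) * u x i)
    (hS : ∀ (a : Fin 2) (x : Fin 3 → ℝ) (t : ℝ),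
      ∑ i, m a.castSucc i * Real.sin ((x + t • Pi.single 2 1 : Fin 3 → ℝ) i - (x + t • Pi.single 2 1 : Fin 3 → ℝ) a.castSucc)
        * u (x + t • Pi.single 2 1) i
      = ∑ i, m a.castSucc i * Real.sin (x i - x a.castSucc) * u x i) (x : Fin 3 → ℝ) :
    u x 2 = 0 := by
  -- rotated equations
  have hR : ∀ (a : Fin 2) (x : Fin 3 → ℝ) (t θ : ℝ),
      m a.castSucc 0 * Real.sin (x 0 - θ) * (u (x + t • Pi.single 2 1) 0 - u x 0)
      + m a.castSucc 1 * Real.sin (x 1 - θ) * (u (x + t • Pi.single 2 1) 1 - u x 1)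
      + m a.castSucc 2 * (Real.sin (x 2 + t - θ) * u (x + t • Pi.single 2 1) 2
          - Real.sin (x 2 - θ) * u x 2) = 0 := by
    intro a x t θ
    have h1 := hC a x t
    have h2 := hS a x t
    have e : ∀ y, Real.sin (y - θ) = Real.sin (y - x a.castSucc) * Real.cos (x a.castSucc - θ)
        + Real.cos (y - x a.castSucc) * Real.sin (x a.castSucc - θ) := by
      intro y
      rw [← Real.sin_add]; ring_nf
    rw [e (x 0), e (x 1), e (x 2), e (x 2 + t)]
    have ha : (a.castSucc : Fin 3) ≠ 2 := by fin_cases a <;> decide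
    simp [Fin.sum_univ_three, ha] at h1 h2
    linear_combination Real.cos (x a.castSucc - θ) * h2 + Real.sin (x a.castSucc - θ) * h1
  have hE : ∀ (x : Fin 3 → ℝ) (t θ : ℝ),
      (m 1 2 * m 0 0 - m 0 2 * m 1 0) * Real.sin (x 0 - θ) * (u (x + t • Pi.single 2 1) 0 - u x 0)
      + (m 1 2 * m 0 1 - m 0 2 * m 1 1) * Real.sin (x 1 - θ)
        * (u (x + t • Pi.single 2 1) 1 - u x 1) = 0 := by
    intro x t θ
    have h1 := hR 0 x t θ
    have h2 := hR 1 x t θ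
    simp only [Fin.castSucc_zero, Fin.castSucc_one] at h1 h2
    linear_combination m 1 2 * h1 - m 0 2 * h2
  by_cases hd : m 1 2 * m 0 0 - m 0 2 * m 1 0 = 0
  · have hd2 : m 1 2 * m 0 1 - m 0 2 * m 1 1 ≠ 0 := by
      intro hd2
      apply hdet
      have : m 1 2 * (m 0 0 * m 1 1 - m 0 1 * m 1 0) = 0 := by
        linear_combination m 1 1 * hd - m 1 0 * hd2
      exact (mul_eq_zero.1 this).resolve_left (hmpos _ _).ne'
    refine zero_of_sin_mul hu (i := 2) (j := 0) (by decide) (fun x => ?_) x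
    refine zero_of_sin_mul (f := fun x => Real.sin (x 2 - x 0) * u x 2) (by fun_prop)
      (i := 1) (j := 0) (by decide) (fun x => ?_) x
    have h1 := hE x (x 0 - x 2) (x 0)
    have h2 := hR 0 x (x 0 - x 2) (x 0)
    simp only [sub_self, Real.sin_zero, mul_zero, zero_mul, zero_add,
      add_sub_cancel, zero_sub, Fin.castSucc_zero, mul_neg] at h1 h2
    rw [mul_assoc] at h1
    have h3 := (mul_eq_zero.1 h1).resolve_left hd2
    have h4 : m 0 2 * (Real.sin (x 2 - x 0) * u x 2) = 0 := by
      linear_combination m 0 1 * h3 - h2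
    rw [(mul_eq_zero.1 h4).resolve_left (hmpos _ _).ne', mul_zero]
  · refine zero_of_sin_mul hu (i := 2) (j := 1) (by decide) (fun x => ?_) x
    refine zero_of_sin_mul (f := fun x => Real.sin (x 2 - x 1) * u x 2) (by fun_prop)
      (i := 0) (j := 1) (by decide) (fun x => ?_) x
    have h1 := hE x (x 1 - x 2) (x 1)
    have h2 := hR 0 x (x 1 - x 2) (x 1)
    simp only [sub_self, Real.sin_zero, mul_zero, zero_mul, add_zero,
      add_sub_cancel, zero_sub, Fin.castSucc_zero, mul_neg] at h1 h2
    rw [mul_assoc] at h1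
    have h3 := (mul_eq_zero.1 h1).resolve_left hd
    have h4 : m 0 2 * (Real.sin (x 2 - x 1) * u x 2) = 0 := by
      linear_combination m 0 0 * h3 - h2
    rw [(mul_eq_zero.1 h4).resolve_left (hmpos _ _).ne', mul_zero]

/-- For the double pendulum on a wheel (two unactuated degrees of freedom),
every smooth solution of the λ-equations is basic: `λ_a^i = κ δ_a^i`;
equivalently `ν₁₁ ≡ κ m₁₁`, `ν₂₂ ≡ (m₂₂/m₁₁) ν₁₁` and
`ν₁₂ = (m₁₂/m₁₁) cos(x² − x¹) ν₁₁`. -/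
theorem double_pendulum_only_basic_solutions
    (m : Matrix (Fin 3) (Fin 3) ℝ) (hmsym : m.IsSymm) (hmpos : ∀ i j, 0 < m i j)
    (hginv : ∀ x : Fin 3 → ℝ, IsUnit (gDP m x).det)
    (lam : (Fin 3 → ℝ) → Fin 2 → Fin 3 → ℝ)
    (hlam : ∀ a i, ContDiff ℝ (⊤ : ℕ∞) (fun x => lam x a i))
    (hlamEq : ∀ (x : Fin 3 → ℝ) (k : Fin 3) (a b : Fin 2),
      pd k (fun y => ∑ i, gDP m y (Fin.castSucc a) i * lam y b i) x
        - ∑ i, chr (gDP m) k (Fin.castSucc a) i x * lam x b i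
        - ∑ i, chr (gDP m) k (Fin.castSucc b) i x * lam x a i = 0) :
    ∃ κ : ℝ,
      (∀ (x : Fin 3 → ℝ) (a : Fin 2) (i : Fin 3),
        lam x a i = κ * if (Fin.castSucc a : Fin 3) = i then 1 else 0) ∧
      (∀ x : Fin 3 → ℝ, nuDP m lam 0 0 x = κ * m 0 0) ∧
      (∀ x : Fin 3 → ℝ, nuDP m lam 1 1 x = (m 1 1 / m 0 0) * nuDP m lam 0 0 x) ∧
      (∀ x : Fin 3 → ℝ, nuDP m lam 0 1 x =
        (m 0 1 / m 0 0) * Real.cos (x 1 - x 0) * nuDP m lam 0 0 x) := by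
  have hs : ∀ a b, m a b = m b a := fun a b => hmsym.apply b a
  have hdet : m 0 0 * m 1 1 - m 0 1 * m 1 0 ≠ 0 := by
    intro h0
    have h := (hginv ![0, 0, Real.pi / 2]).ne_zero
    apply h
    rw [Matrix.det_fin_three]
    simp [gDP]
    linear_combination m 2 2 * h0
  have hld : ∀ a i, Differentiable ℝ (fun x => lam x a i) := fun a i =>
    (hlam a i).differentiable (by simp)
  have hlc : ∀ a i, Continuous (fun x => lam x a i) := fun a i => (hlam a i).continuous
  have hnd : ∀ a b, Differentiable ℝ (nuDP m lam a b) := by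
    intro a b
    have h0 := hld b 0
    have h1 := hld b 1
    have h2 := hld b 2
    unfold nuDP
    simp only [gDP, Matrix.of_apply, Fin.sum_univ_three]
    fun_prop
  -- the sine sums
  let S : Fin 2 → Fin 2 → (Fin 3 → ℝ) → ℝ := fun a b x =>
    ∑ i, m a.castSucc i * Real.sin (x i - x a.castSucc) * lam x b i
  have hE : ∀ (x : Fin 3 → ℝ) (k : Fin 3) (a b : Fin 2), pd k (nuDP m lam a b) x =
      (if k = a.castSucc then S a b x else 0) + (if k = b.castSucc then S b a x else 0) := by
    intro x k a b
    have h := hlamEq x k a b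
    simp only [chr_gDP m hmsym] at h
    have h' : pd k (nuDP m lam a b) x = pd k (fun y => ∑ i, gDP m y (Fin.castSucc a) i * lam y b i) x := rfl
    rw [h']
    have hsum : ∀ c d : Fin 2, ∑ i, (if k = c.castSucc then
        m c.castSucc i * Real.sin (x i - x c.castSucc) else 0) * lam x d i
        = if k = c.castSucc then S c d x else 0 := by
      intro c d
      split_ifs
      · rfl
      · simp
    rw [hsum, hsum] at h
    linarith
  have hn2 : ∀ a b x, pd 2 (nuDP m lam a b) x = 0 := by
    intro a b x
    rw [hE]
    have ha : ∀ a : Fin 2, (2 : Fin 3) ≠ a.castSucc := by decide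
    simp [ha]
  have hnS : ∀ a b x (t : ℝ), nuDP m lam a b (x + t • Pi.single 2 1) = nuDP m lam a b x :=
    fun a b x t => pd_shift_const (hnd a b) 2 (hn2 a b) x t
  have hSS : ∀ a b x (t : ℝ), S a b (x + t • Pi.single 2 1) = S a b x := by
    intro a b x t
    have h := pd_of_shift (t • Pi.single 2 1) (fun x => hnS a b x t) a.castSucc x
    rw [hE, hE] at h
    by_cases hab : a = b
    · subst hab
      simp only [if_true] at h
      linarith
    · have : a.castSucc ≠ b.castSucc := fun h => hab (Fin.castSucc_injective _ h)
      simpa [this] using h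
  have hnc : ∀ a b x, nuDP m lam a b x =
      ∑ i, m a.castSucc i * Real.cos (x i - x a.castSucc) * lam x b i := by
    intro a b x
    unfold nuDP gDP
    refine Finset.sum_congr rfl fun i _ => ?_
    rw [Matrix.of_apply, ← Real.cos_neg, neg_sub]
  have hz : ∀ b x, lam x b 2 = 0 := by
    intro b x
    refine third_zero m hmpos hdet (fun x => lam x b) (hlc b 2) ?_ (fun a x t => hSS a b x t) x
    intro a x t
    have := hnS a b x t
    rw [hnc, hnc] at this
    exact this
  -- off-diagonal entries vanish, diagonal ones are constant
  have hkey : ∀ a b : Fin 2, a ≠ b → (∀ x, lam x a b.castSucc = 0) ∧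
      ∃ κ, ∀ x, lam x a a.castSucc = κ := by
    intro a b hab
    have hab' : a.castSucc ≠ b.castSucc := fun h => hab (Fin.castSucc_injective _ h)
    have hSa : ∀ x, S a a x =
        m a.castSucc b.castSucc * Real.sin (x b.castSucc - x a.castSucc) * lam x a b.castSucc := by
      intro x
      simp only [S, Fin.sum_univ_three, hz]
      fin_cases a <;> fin_cases b <;> simp at hab ⊢
    have hsh : ∀ x (t : ℝ), nuDP m lam a a (x + t • Pi.single b.castSucc 1) = nuDP m lam a a x :=
      pd_shift_const (hnd a a) _ (fun x => by rw [hE]; simp [hab'.symm])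
    have hS0 : ∀ x, S a a x = 0 := by
      intro x
      have h := pd_of_shift ((x a.castSucc - x b.castSucc) • Pi.single b.castSucc 1)
        (fun y => hsh y (x a.castSucc - x b.castSucc)) a.castSucc x
      rw [hE, hE, hSa (x + _)] at h
      simp [hab'] at h
      linarith
    have hoff : ∀ x, lam x a b.castSucc = 0 := by
      refine zero_of_sin_mul (hlc a _) (i := b.castSucc) (j := a.castSucc) hab'.symm fun x => ?_
      have h := hS0 x
      rw [hSa, mul_assoc] at h
      exact (mul_eq_zero.1 h).resolve_left (hmpos _ _).ne'
    refine ⟨hoff, lam 0 a a.castSucc, fun x => ?_⟩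
    have hfd : ∀ x, fderiv ℝ (nuDP m lam a a) x = 0 := by
      intro x
      apply ContinuousLinearMap.coe_injective
      refine LinearMap.pi_ext' fun k => LinearMap.ext_ring ?_
      have h := hE x k a a
      rw [hS0] at h
      simpa [pd] using h
    have hc := is_const_of_fderiv_eq_zero (hnd a a) hfd x 0
    have hv : ∀ x, nuDP m lam a a x = m a.castSucc a.castSucc * lam x a a.castSucc := by
      intro x
      have h1 := hoff x
      rw [hnc]
      simp only [Fin.sum_univ_three, hz]
      fin_cases a <;> fin_cases b <;> simp at hab h1 ⊢ <;> simp [h1]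
    rw [hv, hv] at hc
    exact mul_left_cancel₀ (hmpos _ _).ne' hc
  obtain ⟨h01, κ, h00⟩ := hkey 0 1 (by decide)
  obtain ⟨h10, κ', h11⟩ := hkey 1 0 (by decide)
  simp only [Fin.castSucc_zero, Fin.castSucc_one] at h01 h00 h10 h11
  have hκ : κ' = κ := by
    have hf : nuDP m lam 0 1 = fun x => (m 0 1 * κ') * Real.cos (x 0 - x 1) := by
      funext x
      simp [nuDP, Fin.sum_univ_three, hz, h10, h11, gDP]
      ring
    have h := hE ![0, Real.pi / 2, 0] 1 0 1
    rw [hf, pd_cos] at h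
    simp [S, Fin.sum_univ_three, h00, h01, hz] at h
    rw [hs 1 0] at h
    have hp := hmpos 0 1
    have : m 0 1 * (κ' - κ) = 0 := by linarith
    have := (mul_eq_zero.1 this).resolve_left hp.ne'
    linarith
  subst hκ
  have hm0 := (hmpos 0 0).ne'
  refine ⟨κ', ?_, ?_, ?_, ?_⟩
  · intro x a i
    fin_cases a <;> fin_cases i <;> simp [h00, h01, h10, h11, hz]
  · intro x
    simp [nuDP, Fin.sum_univ_three, hz, h00, h01, gDP]
    ring
  · intro x
    simp [nuDP, Fin.sum_univ_three, hz, h00, h01, h10, h11, gDP]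
    field_simp
  · intro x
    have hc : Real.cos (x 0 - x 1) = Real.cos (x 1 - x 0) := by
      rw [← Real.cos_neg, neg_sub]
    simp [nuDP, Fin.sum_univ_three, hz, h00, h01, h10, h11, gDP, hc]
    field_simp
end
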